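/- arXiv:0708.4250 — 4 statements merged into one kernel-verified Lean document; each statement's English description precedes it below -/
import Mathlib

section
/- (Ghys–Sergiescu) Every element of Thompson's group T has a periodic point: for every f in T there exist a point x of the circle ℝ/ℤ and a positive integer n such that the n-th iterate of f fixes x, i.e. f^[n](x) = x. -/
open Set

/-- The group of self-homeomorphisms of a topological space,
with `(f * g) x = f (g x)`. -/
instance homeomorphGroup (X : Type*) [TopologicalSpace X] : Group (X ≃ₜ X) where
  mul f g := g.trans f
  one := Homeomorph.refl X
  inv := Homeomorph.symm
  mul_assoc _ _ _ := Homeomorph.ext fun _ => rfl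
  one_mul _ := Homeomorph.ext fun _ => rfl
  mul_one _ := Homeomorph.ext fun _ => rfl
  inv_mul_cancel a := Homeomorph.ext fun x => a.symm_apply_apply x

/-- A real number is a dyadic rational if it has the form `a / 2 ^ b`. -/
def IsDyadic (x : ℝ) : Prop := ∃ a : ℤ, ∃ b : ℕ, x = (a : ℝ) / 2 ^ b

/-- A point of the circle `ℝ/ℤ` is dyadic if it is the image of a dyadic rational. -/
def IsDyadicPt (x : AddCircle (1:ℝ)) : Prop :=
  ∃ r : ℝ, IsDyadic r ∧ (r : AddCircle (1:ℝ)) = x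

/-- `F : ℝ → ℝ` is a lift of the circle map `f` if `F (x+1) = F x + 1` and the
reduction of `F` modulo 1 is `f`. -/
def IsLiftOf (f : AddCircle (1:ℝ) ≃ₜ AddCircle (1:ℝ)) (F : ℝ → ℝ) : Prop :=
  (∀ x : ℝ, F (x + 1) = F x + 1) ∧
  ∀ x : ℝ, f (x : AddCircle (1:ℝ)) = ((F x : ℝ) : AddCircle (1:ℝ))

/-- A self-homeomorphism of the circle `ℝ/ℤ` belongs to Thompson's group `T` iff it maps
the set of dyadic points onto itself and has an increasing lift `F : ℝ → ℝ` that is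
piecewise linear with respect to a finite dyadic partition `0 = t 0 < ⋯ < t m = 1`,
every slope being an integer power of `2` and every breakpoint `(t i, F (t i))`
having dyadic rational coordinates. -/
def InThompsonT (f : AddCircle (1:ℝ) ≃ₜ AddCircle (1:ℝ)) : Prop :=
  (∀ x, IsDyadicPt x ↔ IsDyadicPt (f x)) ∧
  ∃ F : ℝ → ℝ, StrictMono F ∧ IsLiftOf f F ∧
    ∃ m : ℕ, ∃ t : Fin (m + 1) → ℝ,
      StrictMono t ∧ t 0 = 0 ∧ t (Fin.last m) = 1 ∧
      (∀ i, IsDyadic (t i) ∧ IsDyadic (F (t i))) ∧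
      ∀ i : Fin m, ∃ k : ℤ, ∃ c : ℝ,
        ∀ x ∈ Icc (t i.castSucc) (t i.succ), F x = (2 : ℝ) ^ k * x + c

def TGood {C : Type*} (d : C → ℕ) (φ : C → C) (M : ℕ) (c : C) : Prop := ∀ n, M ≤ d (φ^[n] c)

def TStep {X C : Type*} (S : C → Set X) (d : C → ℕ) (p : C → C) (f : X → X) (φ : C → C)
    (M : ℕ) : Prop :=
  ∀ c, M ≤ d c → S (φ c) = f '' S c ∧ (M < d c → S (p (φ c)) = f '' S (p c))

lemma TGood.next {C : Type*} {d : C → ℕ} {φ : C → C} {M : ℕ} {c : C} (h : TGood d φ M c) :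
    TGood d φ M (φ c) := fun n => by
  have := h (n + 1)
  rwa [Function.iterate_succ_apply] at this

lemma tstep_iter {X C : Type*} {S : C → Set X} {d : C → ℕ} {p : C → C} {f : X → X} {φ : C → C}
    {M : ℕ} (H : TStep S d p f φ M) {c : C} (hc : TGood d φ M c) (n : ℕ) :
    S (φ^[n] c) = f^[n] '' S c := by
  induction n with
  | zero => simp
  | succ n ih =>
    rw [Function.iterate_succ_apply', (H _ (hc n)).1, ih, Function.iterate_succ', image_comp]

lemma tpull {X C : Type*} {S : C → Set X} {d : C → ℕ} {p : C → C} {f : X → X} {φ : C → C}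
    {M : ℕ} (hM : 1 ≤ M) (hpd : ∀ c, d (p c) = d c - 1) (hS : Function.Injective S)
    (hsub : ∀ c, S c ⊆ S (p c)) (H : TStep S d p f φ M) :
    ∀ k c, d c = k → TGood d φ M c → ∃ n a, TGood d φ M a ∧ d a = M ∧ f^[n] '' S c ⊆ S a := by
  intro k
  induction k with
  | zero =>
    intro c hk hc
    have := hc 0
    simp at this
    omega
  | succ k ih =>
    intro c hk hc
    have h0 : M ≤ d c := hc 0
    by_cases hdM : d c = M
    · exact ⟨0, c, hc, hdM, by simp⟩
    by_cases hp : TGood d φ M (p c)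
    · obtain ⟨n, a, ha, hda, hna⟩ := ih (p c) (by rw [hpd]; omega) hp
      exact ⟨n, a, ha, hda, (image_mono (hsub c)).trans hna⟩
    · have hp' : ∃ n, ¬ M ≤ d (φ^[n] (p c)) := by
        simpa [TGood] using hp
      classical
      set n := Nat.find hp' with hn
      have hlt : ∀ j < n, M ≤ d (φ^[j] (p c)) := fun j hj => not_not.1 (Nat.find_min hp' hj)
      have hcomm : ∀ j ≤ n, φ^[j] (p c) = p (φ^[j] c) := by
        intro j
        induction j with
        | zero => intro _; rfl
        | succ j ihj =>
          intro hj
          have e := ihj (by omega)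
          have h1 := hlt j (by omega)
          rw [Function.iterate_succ_apply', Function.iterate_succ_apply']
          have h2 := h1
          rw [e, hpd] at h2
          apply hS
          rw [(H _ h1).1, e, (H _ (hc j)).2 (by omega)]
      have h3 := Nat.find_spec hp'
      rw [← hn, hcomm n le_rfl, hpd] at h3
      have h4 := hc n
      refine ⟨n, φ^[n] c, ?_, by omega, (tstep_iter H hc n).ge⟩
      intro j
      rw [← Function.iterate_add_apply]
      exact hc _

lemma tfix {X C : Type*} {S : C → Set X} {d : C → ℕ} {p : C → C} {f : X → X} {φ : C → C}
    {M : ℕ} (hM : 1 ≤ M) (hpd : ∀ c, d (p c) = d c - 1) (hS : Function.Injective S)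
    (hsub : ∀ c, S c ⊆ S (p c)) (H : TStep S d p f φ M) (hfin : ∀ n, {c | d c ≤ n}.Finite)
    (c : C) (hc : TGood d φ M c) : ∃ N a, 0 < N ∧ d a = M ∧ f^[N] '' S a ⊆ S a := by
  let A := {a : C // TGood d φ M a ∧ d a = M}
  have : Finite A := ((hfin M).subset (fun a (ha : TGood d φ M a ∧ d a = M) => ha.2.le)).to_subtype
  have step : ∀ a : A, ∃ a' : A, ∃ n, 0 < n ∧ f^[n] '' S a.1 ⊆ S a'.1 := by
    rintro ⟨a, ha, hda⟩
    obtain ⟨n, a', h1, h2, h3⟩ := tpull hM hpd hS hsub H _ (φ a) rfl ha.next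
    refine ⟨⟨a', h1, h2⟩, n + 1, by omega, ?_⟩
    rw [(H a (ha 0)).1] at h3
    rw [Function.iterate_succ, image_comp]
    exact h3
  choose nx hnx using step
  obtain ⟨_, a0, h1, h2, _⟩ := tpull hM hpd hS hsub H _ c rfl hc
  let a : A := ⟨a0, h1, h2⟩
  have key : ∀ i j, ∃ n, j ≤ n ∧ f^[n] '' S (nx^[i] a).1 ⊆ S (nx^[i + j] a).1 := by
    intro i j
    induction j with
    | zero => exact ⟨0, le_rfl, by simp⟩
    | succ j ih =>
      obtain ⟨n, hn, h⟩ := ih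
      obtain ⟨l, hl, h'⟩ := hnx (nx^[i + j] a)
      refine ⟨l + n, by omega, ?_⟩
      rw [Function.iterate_add, image_comp, ← add_assoc, Function.iterate_succ_apply']
      exact (image_mono h).trans h'
  have fin2 : ∀ i j, i < j → nx^[i] a = nx^[j] a →
      ∃ N a, 0 < N ∧ d a = M ∧ f^[N] '' S a ⊆ S a := by
    intro i j hij e
    obtain ⟨n, hn, h⟩ := key i (j - i)
    rw [show i + (j - i) = j by omega, ← e] at h
    exact ⟨n, (nx^[i] a).1, by omega, (nx^[i] a).2.2, h⟩
  obtain ⟨i, j, hij, e⟩ := Finite.exists_ne_map_eq_of_infinite (fun i : ℕ => nx^[i] a)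
  rcases lt_or_gt_of_ne hij with h | h
  · exact fin2 i j h e
  · exact fin2 j i h e.symm

lemma texists_good {X C : Type*} {S : C → Set X} {d : C → ℕ} {p : C → C} {f : X ≃ X}
    {φ ψ : C → C} {M : ℕ} (hS : Function.Injective S)
    (H : TStep S d p f φ M) (H' : TStep S d p f.symm ψ M) (hfin : ∀ n, {c | d c ≤ n}.Finite)
    [Infinite C] : (∃ c, TGood d φ M c) ∨ ∃ c, TGood d ψ M c := by
  by_contra hcon
  push Not at hcon
  obtain ⟨h1, h2⟩ := hcon
  have hinv : ∀ c, M ≤ d c → M ≤ d (φ c) → ψ (φ c) = c := by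
    intro c hc hc'
    apply hS
    rw [(H' _ hc').1, (H _ hc).1, f.symm_image_image]
  have hinj : InjOn φ {c | M ≤ d c} := by
    intro a ha b hb e
    apply hS
    have := (H a ha).1
    rw [e, (H b hb).1] at this
    exact (f.injective.image_injective this).symm
  let W : Set C := {v | M ≤ d v ∧ d (φ v) ≤ M}
  have hW : W.Finite := by
    apply Set.Finite.of_finite_image ((hfin M).subset _) (f := φ)
    · exact hinj.mono (fun v hv => hv.1)
    · rintro _ ⟨v, hv, rfl⟩
      exact hv.2
  have hJ : ∀ v, ∃ J, ¬ M ≤ d (ψ^[J] v) := by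
    intro v
    simpa [TGood] using h2 v
  choose J hJ using hJ
  have hcov : (univ : Set C) ⊆ {c | d c ≤ M} ∪ ⋃ v ∈ W, ⋃ j ∈ Finset.range (J v), {ψ^[j] v} := by
    intro c _
    by_cases hc : d c ≤ M
    · exact Or.inl hc
    right
    have hc1 : ∃ n, ¬ M ≤ d (φ^[n] c) := by simpa [TGood] using h1 c
    classical
    set n := Nat.find hc1 with hn
    have hlt : ∀ j < n, M ≤ d (φ^[j] c) := fun j hj => not_not.1 (Nat.find_min hc1 hj)
    have hsp := Nat.find_spec hc1
    rw [← hn] at hsp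
    have hn0 : n ≠ 0 := by
      intro h
      rw [h] at hsp
      simp at hsp
      omega
    obtain ⟨l, hl⟩ := Nat.exists_eq_succ_of_ne_zero hn0
    have back : ∀ j ≤ l, ψ^[j] (φ^[l] c) = φ^[l - j] c := by
      intro j
      induction j with
      | zero => intro _; rfl
      | succ j ih =>
        intro hj
        rw [Function.iterate_succ_apply', ih (by omega), show l - j = (l - (j + 1)) + 1 by omega,
          Function.iterate_succ_apply']
        apply hinv
        · exact hlt _ (by omega)
        · rw [← Function.iterate_succ_apply' φ]
          exact hlt _ (by omega)
    simp only [mem_iUnion]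
    refine ⟨φ^[l] c, ⟨hlt l (by omega), ?_⟩, l, ?_, ?_⟩
    · rw [← Function.iterate_succ_apply' φ, ← hl]
      omega
    · rw [Finset.mem_range]
      by_contra hle
      push Not at hle
      apply hJ (φ^[l] c)
      rw [back _ hle]
      exact hlt _ (by omega)
    · rw [mem_singleton_iff, back l le_rfl]
      simp
  refine Set.infinite_univ (Set.Finite.subset ?_ hcov)
  exact (hfin M).union (hW.biUnion fun v _ => Set.Finite.biUnion (Finset.finite_toSet _) fun _ _ => finite_singleton _)

/-- The half-open standard dyadic interval `[a/2^b, (a+1)/2^b)`. -/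
def TIv (b : ℕ) (a : ℤ) : Set ℝ := {x | (a : ℝ) ≤ 2 ^ b * x ∧ 2 ^ b * x < a + 1}

def TAff (F : ℝ → ℝ) (M B : ℕ) : Prop :=
  ∀ a : ℤ, ∃ b' ≤ B, ∃ a' : ℤ, ∀ x ∈ TIv M a, 2 ^ b' * F x = 2 ^ M * x - a + a'

def TNice (F : ℝ → ℝ) (M : ℕ) : Prop :=
  ∀ b, M ≤ b → ∀ a, ∃ b' a', F '' TIv b a = TIv b' a' ∧
    (M < b → F '' TIv (b - 1) (a / 2) = TIv (b' - 1) (a' / 2) ∧ 1 ≤ b')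

lemma TNice.mono {F : ℝ → ℝ} {M M' : ℕ} (h : TNice F M) (hM : M ≤ M') : TNice F M' := by
  intro b hb a
  obtain ⟨b', a', h1, h2⟩ := h b (hM.trans hb) a
  exact ⟨b', a', h1, fun h => h2 (by omega)⟩

lemma tiv_sub {M j : ℕ} {a r : ℤ} (h0 : 0 ≤ r) (h1 : r < 2 ^ j) {x : ℝ}
    (hx : x ∈ TIv (M + j) (a * 2 ^ j + r)) : x ∈ TIv M a := by
  obtain ⟨hx1, hx2⟩ := hx
  have h0' : (0 : ℝ) ≤ r := by exact_mod_cast h0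
  have h1' : (r : ℝ) + 1 ≤ 2 ^ j := by exact_mod_cast h1
  have hp : (0 : ℝ) < 2 ^ j := by positivity
  push_cast at hx1 hx2
  rw [pow_add] at hx1 hx2
  constructor
  · by_contra hlt
    push Not at hlt
    nlinarith
  · by_contra hlt
    push Not at hlt
    nlinarith

lemma tiv_img {F : ℝ → ℝ} {M b' j : ℕ} {a a' r : ℤ}
    (h : ∀ x ∈ TIv M a, 2 ^ b' * F x = 2 ^ M * x - a + a') (h0 : 0 ≤ r) (h1 : r < 2 ^ j) :
    F '' TIv (M + j) (a * 2 ^ j + r) = TIv (b' + j) (a' * 2 ^ j + r) := by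
  ext y
  constructor
  · rintro ⟨x, hx, rfl⟩
    have e := h x (tiv_sub h0 h1 hx)
    obtain ⟨hx1, hx2⟩ := hx
    have e2 : (2 : ℝ) ^ (b' + j) * F x = 2 ^ (M + j) * x - a * 2 ^ j + a' * 2 ^ j := by
      rw [pow_add, mul_right_comm, e]; ring
    push_cast at hx1 hx2
    constructor
    · rw [e2]; push_cast; linarith
    · rw [e2]; push_cast; linarith
  · rintro ⟨hy1, hy2⟩
    push_cast at hy1 hy2
    have hxm : (2 ^ b' * y - a' + a) / 2 ^ M ∈ TIv (M + j) (a * 2 ^ j + r) := by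
      have e3 : (2 : ℝ) ^ (M + j) * ((2 ^ b' * y - a' + a) / 2 ^ M)
          = 2 ^ (b' + j) * y - a' * 2 ^ j + a * 2 ^ j := by
        rw [pow_add, pow_add]; field_simp
      constructor
      · rw [e3]; push_cast; linarith
      · rw [e3]; push_cast; linarith
    refine ⟨_, hxm, ?_⟩
    have e := h _ (tiv_sub h0 h1 hxm)
    have hp : (2 : ℝ) ^ b' ≠ 0 := by positivity
    apply mul_left_cancel₀ hp
    rw [e]
    field_simp
    ring

lemma TAff.nice {F : ℝ → ℝ} {M B : ℕ} (h : TAff F M B) : TNice F M := by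
  intro b hb a
  obtain ⟨j, rfl⟩ := Nat.exists_eq_add_of_le hb
  obtain ⟨b', _, a', h'⟩ := h (a / 2 ^ j)
  have hp : (0 : ℤ) < 2 ^ j := by positivity
  have h0 := Int.emod_nonneg a hp.ne'
  have h1 := Int.emod_lt_of_pos a hp
  have e : a / 2 ^ j * 2 ^ j + a % 2 ^ j = a := Int.ediv_mul_add_emod a _
  generalize a / 2 ^ j = a0 at *
  generalize a % 2 ^ j = r at *
  subst e
  refine ⟨b' + j, a' * 2 ^ j + r, tiv_img h' h0 h1, ?_⟩
  intro hj
  obtain ⟨i, rfl⟩ : ∃ i, j = i + 1 := ⟨j - 1, by omega⟩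
  have hh : ∀ z : ℤ, (z * 2 ^ (i + 1) + r) / 2 = z * 2 ^ i + r / 2 := by
    intro z
    rw [pow_succ, ← mul_assoc]
    omega
  rw [hh, hh, ← add_assoc, ← add_assoc]
  refine ⟨tiv_img h' (by omega) ?_, by omega⟩
  rw [pow_succ] at h1
  omega

lemma TAff.symm (e : ℝ ≃o ℝ) {M B : ℕ} (h : TAff e M B) : TAff e.symm B (M + B) := by
  intro a
  set x0 := e.symm ((a : ℝ) / 2 ^ B) with hx0
  set a1 := ⌊(2 : ℝ) ^ M * x0⌋ with ha1
  have hm : x0 ∈ TIv M a1 := ⟨Int.floor_le _, Int.lt_floor_add_one _⟩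
  obtain ⟨b', hb', a', h'⟩ := h a1
  obtain ⟨j, rfl⟩ := Nat.exists_eq_add_of_le hb'
  have himg := tiv_img (j := 0) (r := 0) h' le_rfl (by norm_num)
  simp only [pow_zero, mul_one, add_zero] at himg
  have hy0 : e x0 ∈ TIv b' a' := himg ▸ mem_image_of_mem _ hm
  have hp : (0 : ℤ) < 2 ^ j := by positivity
  have hpR : (0 : ℝ) < 2 ^ j := by positivity
  have hpB : (0 : ℝ) < 2 ^ b' := by positivity
  -- the integer part
  have hq1 : a' * 2 ^ j ≤ a ∧ a < (a' + 1) * 2 ^ j := by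
    obtain ⟨u1, u2⟩ := hy0
    rw [hx0, e.apply_symm_apply, pow_add] at u1 u2
    have e1 : (2 : ℝ) ^ b' * (a / (2 ^ b' * 2 ^ j)) = a / 2 ^ j := by field_simp
    rw [e1] at u1 u2
    rw [le_div_iff₀ hpR] at u1
    rw [div_lt_iff₀ hpR] at u2
    exact ⟨by exact_mod_cast u1, by exact_mod_cast u2⟩
  obtain ⟨r, hr⟩ : ∃ r, a = a' * 2 ^ j + r := ⟨a - a' * 2 ^ j, by ring⟩
  have hr0 : 0 ≤ r := by linarith [hq1.1]
  have hr1 : r < 2 ^ j := by linarith [hq1.2]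
  refine ⟨M + j, by omega, a1 * 2 ^ j + r, ?_⟩
  intro y hy
  rw [hr] at hy
  have hy' : y ∈ TIv b' a' := tiv_sub hr0 hr1 hy
  rw [← himg] at hy'
  obtain ⟨x, hx, rfl⟩ := hy'
  have e2 := h' x hx
  rw [e.symm_apply_apply, hr]
  push_cast
  rw [pow_add, pow_add]
  linear_combination (-(2:ℝ) ^ j) * e2

lemma tint_shift {F : ℝ → ℝ} (hF : ∀ x, F (x + 1) = F x + 1) (n : ℤ) (x : ℝ) :
    F (x + n) = F x + n := by
  have hper : Function.Periodic (fun x => F x - x) 1 := by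
    intro x
    simp only [hF]
    ring
  have := hper.int_mul n x
  simp only [mul_one] at this
  linarith

lemma tdyadic_event {r : ℝ} (hr : IsDyadic r) :
    ∀ᶠ b : ℕ in Filter.atTop, ∃ T : ℤ, (2 : ℝ) ^ b * r = T := by
  obtain ⟨a, b0, rfl⟩ := hr
  filter_upwards [Filter.eventually_ge_atTop b0] with b hb
  obtain ⟨j, rfl⟩ := Nat.exists_eq_add_of_le hb
  refine ⟨2 ^ j * a, ?_⟩
  push_cast
  rw [pow_add]
  field_simp

lemma tfind {m : ℕ} (t : Fin (m + 1) → ℝ) (x : ℝ) (h0 : t 0 ≤ x) (h1 : x < t (Fin.last m)) :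
    ∃ i : Fin m, t i.castSucc ≤ x ∧ x < t i.succ := by
  by_contra hcon
  push Not at hcon
  have : ∀ i : Fin (m + 1), t i ≤ x := by
    intro i
    induction i using Fin.induction with
    | zero => exact h0
    | succ i ih => exact hcon i ih
  exact absurd (this _) (not_le.2 h1)

lemma taff_of_T {F : ℝ → ℝ} (hF : ∀ x, F (x + 1) = F x + 1) {m : ℕ} (t : Fin (m + 1) → ℝ)
    (ht0 : t 0 = 0) (ht1 : t (Fin.last m) = 1)
    (hdy : ∀ i, IsDyadic (t i) ∧ IsDyadic (F (t i))) (hmono : StrictMono t)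
    (hpl : ∀ i : Fin m, ∃ k : ℤ, ∃ c : ℝ,
        ∀ x ∈ Icc (t i.castSucc) (t i.succ), F x = (2 : ℝ) ^ k * x + c) :
    ∃ M B, TAff F M B := by
  choose k c hk using hpl
  have ev1 : ∀ᶠ M : ℕ in Filter.atTop, ∀ i, ∃ T : ℤ, (2 : ℝ) ^ M * t i = T :=
    Filter.eventually_all.2 fun i => tdyadic_event (hdy i).1
  have ev2 : ∀ᶠ M : ℕ in Filter.atTop, ∀ i : Fin m, ∃ b' : ℕ, (M : ℤ) = k i + b' ∧
      ∃ T : ℤ, (2 : ℝ) ^ b' * F (t i.castSucc) = T := by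
    refine Filter.eventually_all.2 fun i => ?_
    obtain ⟨b0, hb0⟩ := Filter.eventually_atTop.1 (tdyadic_event (hdy i.castSucc).2)
    filter_upwards [Filter.eventually_ge_atTop (b0 + (k i).toNat)] with M hM
    exact ⟨((M : ℤ) - k i).toNat, by omega, hb0 _ (by omega)⟩
  obtain ⟨M, hM1, hM2⟩ := (ev1.and ev2).exists
  choose T hT using hM1
  choose b hb T' hT' using hM2
  refine ⟨M, Finset.univ.sup b, ?_⟩
  intro a
  have hp : (0 : ℤ) < 2 ^ M := by positivity
  have hpR : (0 : ℝ) < 2 ^ M := by positivity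
  have g0 := Int.emod_nonneg a hp.ne'
  have g1 := Int.emod_lt_of_pos a hp
  have ge : a / 2 ^ M * 2 ^ M + a % 2 ^ M = a := Int.ediv_mul_add_emod a _
  generalize a / 2 ^ M = n at *
  generalize a % 2 ^ M = a0 at *
  have g0R : (0 : ℝ) ≤ a0 := by exact_mod_cast g0
  have g1R : (a0 : ℝ) < 2 ^ M := by exact_mod_cast g1
  obtain ⟨i, hi1, hi2⟩ := tfind t ((a0 : ℝ) / 2 ^ M) (by rw [ht0]; positivity)
    (by rw [ht1, div_lt_one hpR]; exact g1R)
  have hi3 : a0 + 1 ≤ T i.succ := by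
    rw [div_lt_iff₀ hpR, mul_comm, hT] at hi2
    exact_mod_cast hi2
  have hi3R : (a0 : ℝ) + 1 ≤ T i.succ := by exact_mod_cast hi3
  have hi1R : (T i.castSucc : ℝ) ≤ a0 := by
    rw [le_div_iff₀ hpR, mul_comm, hT] at hi1
    exact hi1
  refine ⟨b i, Finset.le_sup (Finset.mem_univ i), a - 2 ^ M * n + T' i - T i.castSucc + 2 ^ b i * n, ?_⟩
  intro x hx
  have geR : (n : ℝ) * 2 ^ M + a0 = a := by exact_mod_cast ge
  obtain ⟨hx1, hx2⟩ := hx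
  have hmem : x - n ∈ Icc (t i.castSucc) (t i.succ) := by
    constructor
    · apply le_of_mul_le_mul_left _ hpR
      rw [hT]
      nlinarith
    · apply le_of_mul_le_mul_left _ hpR
      rw [hT]
      nlinarith
  have f1 := hk i _ hmem
  have f2 := hk i (t i.castSucc) ⟨le_rfl, (hmono (Fin.castSucc_lt_succ)).le⟩
  have f3 := tint_shift hF n (x - n)
  rw [sub_add_cancel] at f3
  have pw : (2 : ℝ) ^ b i * 2 ^ k i = 2 ^ M := by
    rw [← zpow_natCast (2 : ℝ) M, hb i, zpow_add₀ (by norm_num), zpow_natCast, mul_comm]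
  have h4 := hT' i
  have h5 := hT i.castSucc
  rw [f2] at h4
  rw [f3, f1]
  push_cast
  linear_combination (x - n - t i.castSucc) * pw + h4 - h5

lemma tfixed {G : ℝ → ℝ} (hc : Continuous G) (hmono : Monotone G) {l r : ℝ} (hlr : l < r)
    (hr : r - l < 1) (h : ∀ x ∈ Ico l r, ∃ n : ℤ, G x + n ∈ Ico l r) :
    ∃ x, ∃ n : ℤ, G x + n = x := by
  obtain ⟨n, hn⟩ := h l ⟨le_rfl, hlr⟩
  have hmaps : MapsTo (fun x => G x + n) (Icc l r) (Icc l r) := by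
    intro x hx
    refine ⟨hn.1.trans (by simpa using hmono hx.1), ?_⟩
    by_contra hgt
    push Not at hgt
    obtain ⟨z, hz, hz'⟩ := intermediate_value_Icc hx.1
      ((hc.add continuous_const).continuousOn (f := fun x => G x + n)) ⟨hn.2.le, hgt.le⟩
    simp only at hz' hgt
    have hzx : z ≠ x := by
      rintro rfl
      linarith
    have hzr : z < r := lt_of_lt_of_le (lt_of_le_of_ne hz.2 hzx) hx.2
    obtain ⟨n', hn'⟩ := h z ⟨hz.1, hzr⟩
    have i1 : ((n' : ℤ) : ℝ) < n := by linarith [hn'.2]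
    have i2 : (n : ℝ) < n' + 1 := by linarith [hn'.1]
    have i1' : n' < n := by exact_mod_cast i1
    have i2' : n < n' + 1 := by exact_mod_cast i2
    omega
  obtain ⟨x, _, hx⟩ := exists_mem_Icc_isFixedPt_of_mapsTo
    ((hc.add continuous_const).continuousOn (f := fun x => G x + n)) hlr.le hmaps
  exact ⟨x, n, hx⟩

/-- Indices of standard dyadic arcs of the circle. -/
abbrev TC : Type := {c : ℕ × ℤ // 0 ≤ c.2 ∧ c.2 < 2 ^ c.1}

def tarc (b : ℕ) (a : ℤ) : Set (AddCircle (1:ℝ)) := (fun x : ℝ => (x : AddCircle (1:ℝ))) '' TIv b a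

def tS (c : TC) : Set (AddCircle (1:ℝ)) := tarc c.1.1 c.1.2

def td (c : TC) : ℕ := c.1.1

def tp (c : TC) : TC := ⟨(c.1.1 - 1, c.1.2 / 2), by
  obtain ⟨⟨b, a⟩, h0, h1⟩ := c
  simp only at *
  refine ⟨by omega, ?_⟩
  cases b with
  | zero => simp at *; omega
  | succ b => rw [pow_succ] at h1; simp only [Nat.add_sub_cancel]; omega⟩

lemma tcoe_int (x : ℝ) (n : ℤ) : ((x + n : ℝ) : AddCircle (1:ℝ)) = x := by
  have h : ((n : ℝ) : AddCircle (1:ℝ)) = 0 := by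
    rw [AddCircle.coe_eq_zero_iff]
    exact ⟨n, by simp⟩
  rw [AddCircle.coe_add, h, add_zero]

lemma tcoe_eq {x y : ℝ} (h : (x : AddCircle (1:ℝ)) = y) : ∃ n : ℤ, x + n = y := by
  have h2 : ((y - x : ℝ) : AddCircle (1:ℝ)) = 0 := by
    rw [AddCircle.coe_sub, h, sub_self]
  rw [AddCircle.coe_eq_zero_iff] at h2
  obtain ⟨n, hn⟩ := h2
  refine ⟨n, ?_⟩
  simp at hn
  linarith

lemma tarc_shift (b : ℕ) (a n : ℤ) : tarc b (a + n * 2 ^ b) ⊆ tarc b a := by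
  rintro _ ⟨x, ⟨h1, h2⟩, rfl⟩
  push_cast at h1 h2
  refine ⟨x + ((-n : ℤ) : ℝ), ⟨?_, ?_⟩, tcoe_int x (-n)⟩
  · push_cast; linarith
  · push_cast; linarith

lemma tarc_shift_eq (b : ℕ) (a n : ℤ) : tarc b (a + n * 2 ^ b) = tarc b a := by
  refine (tarc_shift b a n).antisymm ?_
  have := tarc_shift b (a + n * 2 ^ b) (-n)
  rwa [show a + n * 2 ^ b + -n * 2 ^ b = a by ring] at this

lemma tiv_Ico (b : ℕ) (a : ℤ) : TIv b a = Ico ((a : ℝ) / 2 ^ b) ((a + 1) / 2 ^ b) := by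
  ext x
  have hp : (0 : ℝ) < 2 ^ b := by positivity
  rw [mem_Ico, div_le_iff₀ hp, lt_div_iff₀ hp, mul_comm x]
  rfl

lemma tiv_lt (b : ℕ) (a : ℤ) : (a : ℝ) / 2 ^ b < (a + 1) / 2 ^ b := by
  have hp : (0 : ℝ) < 2 ^ b := by positivity
  gcongr
  linarith

lemma tiv_unit (c : TC) {x : ℝ} (hx : x ∈ TIv c.1.1 c.1.2) : 0 ≤ x ∧ x < 1 := by
  obtain ⟨⟨b, a⟩, h0, h1⟩ := c
  obtain ⟨h2, h3⟩ := hx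
  simp only at *
  have hp : (0 : ℝ) < 2 ^ b := by positivity
  have h0' : (0 : ℝ) ≤ a := by exact_mod_cast h0
  have h1' : (a : ℝ) + 1 ≤ 2 ^ b := by exact_mod_cast h1
  constructor
  · by_contra hh
    push Not at hh
    nlinarith
  · by_contra hh
    push Not at hh
    nlinarith

lemma tS_sub {c c' : TC} (h : tS c ⊆ tS c') : TIv c.1.1 c.1.2 ⊆ TIv c'.1.1 c'.1.2 := by
  intro x hx
  obtain ⟨y, hy, hyx⟩ := h ⟨x, hx, rfl⟩
  obtain ⟨n, hn⟩ := tcoe_eq hyx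
  have h1 := tiv_unit c hx
  have h2 := tiv_unit c' hy
  have i1 : (n : ℝ) < 1 := by linarith
  have i2 : (-1 : ℝ) < n := by linarith
  have i1' : n < 1 := by exact_mod_cast i1
  have i2' : -1 < n := by exact_mod_cast i2
  obtain rfl : n = 0 := by omega
  simp at hn
  rwa [← hn]

lemma tS_inj : Function.Injective tS := by
  intro c c' h
  have h1 : TIv c.1.1 c.1.2 = TIv c'.1.1 c'.1.2 := (tS_sub h.le).antisymm (tS_sub h.ge)
  obtain ⟨⟨b, a⟩, _⟩ := c
  obtain ⟨⟨b', a'⟩, _⟩ := c'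
  simp only at h1
  rw [tiv_Ico, tiv_Ico] at h1
  have s1 := (Ico_subset_Ico_iff (tiv_lt b a)).1 h1.le
  have s2 := (Ico_subset_Ico_iff (tiv_lt b' a')).1 h1.ge
  have e1 : (a : ℝ) / 2 ^ b = a' / 2 ^ b' := le_antisymm s2.1 s1.1
  have e2 : ((a : ℝ) + 1) / 2 ^ b = (a' + 1) / 2 ^ b' := le_antisymm s1.2 s2.2
  have e3 : (1 : ℝ) / 2 ^ b = 1 / 2 ^ b' := by
    rw [add_div, add_div, e1] at e2
    linarith
  have e4 : (2 : ℝ) ^ b = 2 ^ b' := by simpa using e3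
  have e5 : b = b' := pow_right_injective₀ (by norm_num) (by norm_num) e4
  subst e5
  have hp : (2 : ℝ) ^ b ≠ 0 := by positivity
  have e6 : (a : ℝ) = a' := by
    field_simp at e1
    exact e1
  have e7 : a = a' := by exact_mod_cast e6
  subst e7
  rfl

lemma tS_parent (c : TC) : tS c ⊆ tS (tp c) := by
  obtain ⟨⟨b, a⟩, h0, h1⟩ := c
  rcases b with _ | b
  · simp only [pow_zero] at h0 h1
    obtain rfl : a = 0 := by omega
    exact subset_rfl
  · apply image_mono
    intro x hx
    have e : a = a / 2 * 2 ^ 1 + a % 2 := by omega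
    simp only at hx
    rw [e] at hx
    exact tiv_sub (j := 1) (by omega) (by omega) hx

lemma td_fin (n : ℕ) : {c : TC | td c ≤ n}.Finite := by
  apply Set.Finite.of_finite_image (f := Subtype.val) _ Subtype.val_injective.injOn
  apply (((Set.finite_Iic n).prod (Set.finite_Ico (0 : ℤ) (2 ^ n)))).subset
  rintro _ ⟨⟨⟨b, a⟩, h0, h1⟩, hb, rfl⟩
  have hb' : b ≤ n := hb
  simp only at h0 h1
  exact ⟨hb', h0, h1.trans_le (pow_le_pow_right₀ (by norm_num) hb')⟩

instance tC_infinite : Infinite TC :=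
  Infinite.of_injective (fun n : ℕ => (⟨(n, 0), le_rfl, by positivity⟩ : TC)) (by
    intro a b h
    simpa using h)

lemma tstep_of_nice {f : AddCircle (1:ℝ) → AddCircle (1:ℝ)} {F : ℝ → ℝ}
    (hf : ∀ x : ℝ, f x = (F x : ℝ)) {M : ℕ} (h : TNice F M) : ∃ φ, TStep tS td tp f φ M := by
  have himg : ∀ b a b' a', F '' TIv b a = TIv b' a' → f '' tarc b a = tarc b' a' := by
    intro b a b' a' e
    rw [tarc, tarc, ← e, image_image, image_image]
    simp only [hf]
  have : ∀ c : TC, ∃ c' : TC, M ≤ td c → tS c' = f '' tS c ∧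
      (M < td c → tS (tp c') = f '' tS (tp c)) := by
    intro c
    by_cases hc : M ≤ td c
    · obtain ⟨b', a', h1, h2⟩ := h c.1.1 hc c.1.2
      have hp : (0 : ℤ) < 2 ^ b' := by positivity
      refine ⟨⟨(b', a' % 2 ^ b'), Int.emod_nonneg _ hp.ne', Int.emod_lt_of_pos _ hp⟩, fun _ => ?_⟩
      have e0 : a' % 2 ^ b' = a' + (-(a' / 2 ^ b')) * 2 ^ b' := by
        have := Int.ediv_mul_add_emod a' (2 ^ b')
        linarith
      constructor
      · refine Eq.trans ?_ (himg _ _ _ _ h1).symm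
        show tarc b' (a' % 2 ^ b') = _
        rw [e0, tarc_shift_eq]
      · intro hlt
        obtain ⟨h3, h4⟩ := h2 hlt
        refine Eq.trans ?_ (himg _ _ _ _ h3).symm
        show tarc (b' - 1) (a' % 2 ^ b' / 2) = _
        obtain ⟨i, rfl⟩ : ∃ i, b' = i + 1 := ⟨b' - 1, by omega⟩
        rw [e0, Nat.add_sub_cancel]
        generalize -(a' / 2 ^ (i + 1)) = q
        rw [show (a' + q * 2 ^ (i + 1)) / 2 = a' / 2 + q * 2 ^ i by
          rw [pow_succ, ← mul_assoc]; omega, tarc_shift_eq]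
    · exact ⟨c, fun h => absurd h hc⟩
  choose φ hφ using this
  exact ⟨φ, hφ⟩

lemma tperiodic_of_good {f : AddCircle (1:ℝ) → AddCircle (1:ℝ)} (e : ℝ ≃o ℝ)
    (hf : ∀ x : ℝ, f x = (e x : ℝ)) {M : ℕ} (hM : 1 ≤ M) {φ : TC → TC}
    (H : TStep tS td tp f φ M) (c : TC) (hc : TGood td φ M c) :
    ∃ x, ∃ n : ℕ, 0 < n ∧ f^[n] x = x := by
  obtain ⟨N, a, hN, ha, hsub⟩ := tfix hM (fun _ => rfl) tS_inj tS_parent H td_fin c hc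
  have hfN : ∀ (n : ℕ) (x : ℝ), f^[n] x = ((e^[n] x : ℝ) : AddCircle (1:ℝ)) := by
    intro n
    induction n with
    | zero => intro x; rfl
    | succ n ih =>
      intro x
      rw [Function.iterate_succ_apply, Function.iterate_succ_apply, hf, ih]
  have hcont : Continuous (e^[N]) := e.continuous.iterate N
  have hmono : Monotone (e^[N]) := e.monotone.iterate N
  have hlen : ((a.1.2 : ℝ) + 1) / 2 ^ a.1.1 - a.1.2 / 2 ^ a.1.1 < 1 := by
    rw [← sub_div, add_sub_cancel_left, div_lt_one (by positivity)]
    exact one_lt_pow₀ (by norm_num) (by unfold td at ha; omega)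
  obtain ⟨x, n, hx⟩ := tfixed hcont hmono (tiv_lt a.1.1 a.1.2) hlen (by
    intro x hx
    rw [← tiv_Ico] at hx ⊢
    obtain ⟨y, hy, hyx⟩ := hsub ⟨_, ⟨x, hx, rfl⟩, rfl⟩
    simp only [hfN] at hyx
    obtain ⟨n, hn⟩ := tcoe_eq hyx.symm
    exact ⟨n, hn ▸ hy⟩)
  refine ⟨x, N, hN, ?_⟩
  rw [hfN, ← tcoe_int _ n, hx]

/-- (Ghys–Sergiescu) Every element of Thompson's group `T` has a periodic point: for
every `f ∈ T` there are a point `x` of the circle `ℝ/ℤ` and a positive integer `n`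
with `f^[n] x = x`. -/
theorem thompsonT_periodic_point :
    ∀ f : AddCircle (1:ℝ) ≃ₜ AddCircle (1:ℝ), InThompsonT f →
      ∃ x : AddCircle (1:ℝ), ∃ n : ℕ, 0 < n ∧ (⇑f)^[n] x = x := by
  rintro f ⟨-, F, hmono, ⟨hF1, hF⟩, m, t, htm, ht0, ht1, hdy, hpl⟩
  have hsurj : Function.Surjective F := by
    intro y
    obtain ⟨x, hx⟩ := f.surjective (y : AddCircle (1:ℝ))
    obtain ⟨x, rfl⟩ := QuotientAddGroup.mk_surjective x
    have hx' : ((F x : ℝ) : AddCircle (1:ℝ)) = y := (hF x).symm.trans hx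
    obtain ⟨n, hn⟩ := tcoe_eq hx'
    exact ⟨x + n, by rw [tint_shift hF1, hn]⟩
  let e : ℝ ≃o ℝ := hmono.orderIsoOfSurjective F hsurj
  have he : ∀ x : ℝ, f x = ((e x : ℝ) : AddCircle (1:ℝ)) := hF
  have he' : ∀ x : ℝ, f.symm x = ((e.symm x : ℝ) : AddCircle (1:ℝ)) := by
    intro x
    rw [f.symm_apply_eq, he, e.apply_symm_apply]
  obtain ⟨M, B, hA⟩ := taff_of_T hF1 t ht0 ht1 hdy htm hpl
  have hA' : TAff e M B := hA
  have n1 : TNice e (M + B + 1) := hA'.nice.mono (by omega)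
  have n2 : TNice e.symm (M + B + 1) := (TAff.symm e hA').nice.mono (by omega)
  obtain ⟨φ, hφ⟩ := tstep_of_nice he n1
  obtain ⟨ψ, hψ⟩ := tstep_of_nice he' n2
  rcases texists_good (f := f.toEquiv) tS_inj hφ hψ td_fin with ⟨c, hc⟩ | ⟨c, hc⟩
  · exact tperiodic_of_good e he (by omega) hφ c hc
  · obtain ⟨x, n, hn, hx⟩ := tperiodic_of_good e.symm he' (by omega) hψ c hc
    refine ⟨x, n, hn, ?_⟩
    have hl : Function.LeftInverse (⇑f)^[n] (⇑f.symm)^[n] :=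
      Function.LeftInverse.iterate f.apply_symm_apply n
    have := hl x
    rwa [hx] at this
end

section
/- Every element of Thompson's group T has rational rotation number: for every f in T and every lift F : ℝ → ℝ of f (a continuous monotone map with F(x+1) = F(x)+1 covering f), the translation number τ(F) = lim_{n→∞} F^n(x)/n is a rational number. -/
open Set

/-- `x` has denominator dividing `2 ^ b`. -/
def InD (b : ℕ) (x : ℝ) : Prop := ∃ a : ℤ, x * 2 ^ b = a

lemma inD_mono {b b' : ℕ} (h : b ≤ b') {x : ℝ} (hx : InD b x) : InD b' x := by
  obtain ⟨a, ha⟩ := hx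
  obtain ⟨d, rfl⟩ := Nat.exists_eq_add_of_le h
  refine ⟨a * 2 ^ d, ?_⟩
  push_cast
  rw [← ha]; ring

lemma inD_add {b : ℕ} {x y : ℝ} (hx : InD b x) (hy : InD b y) : InD b (x + y) := by
  obtain ⟨a, ha⟩ := hx
  obtain ⟨c, hc⟩ := hy
  refine ⟨a + c, ?_⟩
  push_cast
  rw [← ha, ← hc]; ring

lemma inD_neg {b : ℕ} {x : ℝ} (hx : InD b x) : InD b (-x) := by
  obtain ⟨a, ha⟩ := hx
  refine ⟨-a, ?_⟩
  push_cast
  rw [← ha]; ring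

lemma inD_int (b : ℕ) (q : ℤ) : InD b (q : ℝ) := ⟨q * 2 ^ b, by push_cast; ring⟩

lemma inD_zpow {b b' : ℕ} {k : ℤ} (h : (b : ℤ) ≤ b' + k) {x : ℝ} (hx : InD b x) :
    InD b' ((2 : ℝ) ^ k * x) := by
  obtain ⟨a, ha⟩ := hx
  obtain ⟨d, hd⟩ := Int.eq_ofNat_of_zero_le (sub_nonneg.2 h)
  refine ⟨a * 2 ^ d, ?_⟩
  have e : (2 : ℝ) ^ k * 2 ^ b' = 2 ^ b * 2 ^ d := by
    rw [← zpow_natCast (2 : ℝ) b', ← zpow_natCast (2 : ℝ) b, ← zpow_natCast (2 : ℝ) d,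
      ← zpow_add₀ (by norm_num), ← zpow_add₀ (by norm_num)]
    congr 1
    omega
  push_cast
  rw [← ha]
  linear_combination x * e

lemma isDyadic_iff (x : ℝ) : IsDyadic x ↔ ∃ b, InD b x := by
  constructor
  · rintro ⟨a, b, rfl⟩
    exact ⟨b, a, by field_simp⟩
  · rintro ⟨b, a, h⟩
    exact ⟨a, b, by rw [← h]; field_simp⟩

/-- The level of a dyadic number. -/
noncomputable def lev (x : ℝ) : ℕ := sInf {b | InD b x}

lemma inD_lev {x : ℝ} (h : IsDyadic x) : InD (lev x) x :=
  Nat.sInf_mem (s := {b | InD b x}) ((isDyadic_iff x).1 h)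

lemma lev_le {x : ℝ} {b : ℕ} (h : InD b x) : lev x ≤ b := Nat.sInf_le h

lemma inD_add_int {b : ℕ} {x : ℝ} (q : ℤ) : InD b (x + q) ↔ InD b x := by
  constructor
  · intro h
    have := inD_add h (inD_neg (inD_int b q))
    simpa using this
  · intro h
    exact inD_add h (inD_int b q)

lemma lev_add_int (x : ℝ) (q : ℤ) : lev (x + q) = lev x := by
  unfold lev
  simp only [inD_add_int]

lemma isDyadic_add_int (x : ℝ) (q : ℤ) : IsDyadic (x + q) ↔ IsDyadic x := by
  simp only [isDyadic_iff, inD_add_int]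

lemma lev_step {N : ℕ} {k : ℤ} {c y z : ℝ} (hy : IsDyadic y) (hz : IsDyadic z)
    (hc : InD N c) (h : z = (2 : ℝ) ^ k * y + c) :
    (lev z : ℤ) ≤ max (lev y - k) N ∧ (lev y : ℤ) ≤ max (max (lev z : ℤ) N + k) 0 := by
  constructor
  · obtain ⟨b, hb⟩ := Int.eq_ofNat_of_zero_le (a := max (lev y - k) N) (by omega)
    rw [hb]
    have : InD b z := by
      rw [h]
      exact inD_add (inD_zpow (by omega) (inD_lev hy)) (inD_mono (by omega) hc)
    exact_mod_cast lev_le this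
  · obtain ⟨b, hb⟩ := Int.eq_ofNat_of_zero_le (a := max (max (lev z : ℤ) N + k) 0) (by omega)
    rw [hb]
    have : InD b y := by
      have e : y = (2 : ℝ) ^ (-k) * (z + -c) := by
        rw [h, zpow_neg]; field_simp; ring
      rw [e]
      refine inD_zpow (b := max (lev z) N) (by push_cast; omega) ?_
      exact inD_add (inD_mono (by omega) (inD_lev hz)) (inD_mono (by omega) (inD_neg hc))
    exact_mod_cast lev_le this

/-- Piecewise linear hypothesis in a convenient form. -/
def PLHyp (F : ℝ → ℝ) (N : ℕ) (P : Finset ℝ) : Prop :=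
  ∀ a b : ℝ, (∃ t ∈ P, ∃ q : ℤ, t + q ∈ Set.uIoc a b) ∨
    ∃ k : ℤ, ∃ c : ℝ, |k| ≤ N ∧ InD N c ∧ F a = (2 : ℝ) ^ k * a + c ∧ F b = (2 : ℝ) ^ k * b + c

lemma good_times (α : ℝ) (hα : Irrational α) (M : ℕ) :
    ∃ n : ℕ, M < n ∧ ∃ p : ℤ, ∀ k : ℕ, 0 < k → k < n → ∀ q : ℤ, |n * α - p| < |k * α - q| := by
  have hpos : ∀ k : ℕ, 0 < k → 0 < |k * α - round (k * α)| := by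
    intro k hk
    rw [abs_pos]
    intro h
    have := (hα.natCast_mul (m := k) (by omega))
    exact this ⟨round (k * α), by push_cast; linarith⟩
  have hε : ∃ ε : ℝ, 0 < ε ∧ ∀ k : ℕ, 0 < k → k ≤ M → ε ≤ |k * α - round (k * α)| := by
    induction M with
    | zero => exact ⟨1, one_pos, fun k h1 h2 => by omega⟩
    | succ M ih =>
      obtain ⟨ε, h0, h1⟩ := ih
      refine ⟨min ε (|(M + 1 : ℕ) * α - round ((M + 1 : ℕ) * α)|),
        lt_min h0 (hpos _ (by omega)), fun k hk hkM => ?_⟩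
      rcases Nat.lt_or_ge M k with h | h
      · obtain rfl : k = M + 1 := by omega
        exact min_le_right _ _
      · exact (min_le_left _ _).trans (h1 k hk h)
  obtain ⟨ε, h0, h1⟩ := hε
  have hex : ∃ n : ℕ, 0 < n ∧ |n * α - round (n * α)| < ε := by
    obtain ⟨m, hm⟩ := exists_nat_one_div_lt h0
    obtain ⟨k, hk, -, h⟩ := Real.exists_nat_abs_mul_sub_round_le α (n := m + 1) (by omega)
    refine ⟨k, hk, h.trans_lt (lt_of_le_of_lt ?_ hm)⟩
    push_cast
    apply one_div_le_one_div_of_le <;> linarith [(Nat.cast_nonneg m : (0 : ℝ) ≤ m)]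
  classical
  have hs := Nat.find_spec hex
  refine ⟨Nat.find hex, ?_, round (Nat.find hex * α), ?_⟩
  · by_contra hlt
    push Not at hlt
    exact absurd (h1 _ hs.1 hlt) (not_le.2 hs.2)
  · intro k hk hkn q
    have := Nat.find_min hex hkn
    push Not at this
    exact hs.2.trans_le ((this hk).trans (round_le _ _))

lemma core (u : CircleDeg1Liftˣ) (hdy : ∀ r, IsDyadic (u r) ↔ IsDyadic r) (N : ℕ) (P : Finset ℝ)
    (hPL : PLHyp (fun x => u x) N P) :
    ∃ q : ℚ, CircleDeg1Lift.translationNumber (u : CircleDeg1Lift) = (q : ℝ) := by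
  by_contra hcon
  set α := CircleDeg1Lift.translationNumber (u : CircleDeg1Lift) with hαdef
  have hα : Irrational α := by
    rintro ⟨q, hq⟩
    exact hcon ⟨q, hq.symm⟩
  let x : ℤ → ℝ := fun j => ((u ^ j : CircleDeg1Liftˣ) : CircleDeg1Lift) 0
  have hxadd : ∀ i j : ℤ, ((u ^ i : CircleDeg1Liftˣ) : CircleDeg1Lift) (x j) = x (i + j) := by
    intro i j
    simp only [x, zpow_add, Units.val_mul, CircleDeg1Lift.mul_apply]
  have hx1 : ∀ j, u (x j) = x (j + 1) := by
    intro j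
    rw [add_comm, ← hxadd, zpow_one]
  -- order
  have hord : ∀ (i j q : ℤ), (i : ℝ) * α < j * α + q → x i < x j + q := by
    intro i j q h
    have := CircleDeg1Lift.map_lt_of_translationNumber_lt_int
      ((u ^ (i - j) : CircleDeg1Liftˣ) : CircleDeg1Lift) (n := q) (by
        rw [CircleDeg1Lift.translationNumber_zpow]
        push_cast
        linarith) (x j)
    rwa [hxadd, sub_add_cancel] at this
  have hord' : ∀ (i j q : ℤ), x i ≤ x j + q → (i : ℝ) * α ≤ j * α + q := by
    intro i j q h
    by_contra hlt
    push Not at hlt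
    have := hord j i (-q) (by push_cast; linarith)
    push_cast at this
    linarith
  have hinj : ∀ (i j q : ℤ), x i = x j + q → i = j := by
    intro i j q h
    by_contra hij
    have h1 := hord' i j q h.le
    have h2 := hord' j i (-q) (by push_cast; linarith)
    push_cast at h2
    have := hα.intCast_mul (m := i - j) (sub_ne_zero.2 hij)
    exact this ⟨q, by push_cast; linarith⟩
  have hxd : ∀ j, IsDyadic (x j) := by
    intro j
    induction j using Int.induction_on with
    | zero => exact ⟨0, 0, by simp [x]⟩
    | succ i ih => rw [← hx1]; exact (hdy _).2 ih
    | pred i ih =>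
      rw [← hdy, hx1]
      simpa using ih
  have hfin : ∀ B : ℕ, {j : ℤ | lev (x j) ≤ B}.Finite := by
    intro B
    have hin : ∀ j : ℤ, ∃ a : ℤ, lev (x j) ≤ B → x j * 2 ^ B = a := by
      intro j
      by_cases h : lev (x j) ≤ B
      · obtain ⟨a, ha⟩ := inD_mono h (inD_lev (hxd j))
        exact ⟨a, fun _ => ha⟩
      · exact ⟨0, fun h' => absurd h' h⟩
    choose a ha using hin
    have : NeZero (2 ^ B) := ⟨by positivity⟩
    refine Set.Finite.of_finite_image (f := fun j => (a j : ZMod (2 ^ B))) (Set.toFinite _) ?_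
    intro i hi j hj hij
    have hd := (ZMod.intCast_eq_intCast_iff_dvd_sub _ _ _).1 hij
    obtain ⟨q, hq⟩ := hd
    apply hinj i j (-q)
    have h1 := ha i hi
    have h2 := ha j hj
    have h3 : (a j : ℝ) - a i = 2 ^ B * q := by exact_mod_cast hq
    have h4 : (2 : ℝ) ^ B ≠ 0 := by positivity
    apply mul_right_cancel₀ h4
    push_cast
    linear_combination h1 - h2 - h3
  let w : ℤ → ℤ := fun j => lev (x j)
  let g : ℤ → ℤ := fun j => w (j + 1) - w j
  let G : ℕ := 3 * N
  have hstep : ∀ i j p : ℤ, (∃ k : ℤ, ∃ c : ℝ, |k| ≤ N ∧ InD N c ∧ u (x i) = (2 : ℝ) ^ k * (x i) + c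
      ∧ u (x j + p) = (2 : ℝ) ^ k * (x j + p) + c) → N < w i → N < w (i + 1) → N < w j →
      N < w (j + 1) → g i = g j := by
    rintro i j p ⟨k, c, hk, hc, h1, h2⟩ hi hi1 hj hj1
    have e : u (x j + p) = x (j + 1) + p := by
      rw [CircleDeg1Lift.map_add_int, hx1]
    rw [hx1] at h1
    rw [e] at h2
    have a1 := lev_step (hxd i) (hxd (i + 1)) hc h1
    have a2 := lev_step ((isDyadic_add_int _ p).2 (hxd j))
      ((isDyadic_add_int _ p).2 (hxd (j + 1))) hc h2
    simp only [lev_add_int] at a2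
    simp only [g, w] at *
    omega
  have hgb : ∀ i, |g i| ≤ G := by
    intro i
    rcases hPL (x i) (x i) with ⟨t, -, q, h⟩ | ⟨k, c, hk, hc, h1, -⟩
    · simp at h
    · simp only [hx1] at h1
      have a1 := lev_step (hxd i) (hxd (i + 1)) hc h1
      rw [abs_le] at hk ⊢
      simp only [g, w, G]
      push_cast
      omega
  let A : Finset ℤ := (hfin N).toFinset
  have hA : ∀ j, j ∉ A → (N : ℤ) < w j := by
    intro j hj
    simp only [A, Set.Finite.mem_toFinset, Set.mem_ofPred_eq, not_le] at hj
    simp only [w]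
    exact_mod_cast hj
  -- the main bound
  let C : ℕ := P.card + 4 * A.card
  have hmain : ∀ (n : ℕ) (p : ℤ),
      (∀ k : ℕ, 0 < k → k < n → ∀ q : ℤ, |n * α - p| < |k * α - q|) →
      w n + w (-n) ≤ 2 * w 0 + C * (2 * G) := by
    intro n p hn
    classical
    have hsum1 : w n - w 0 = ∑ j ∈ Finset.range n, g j := by
      have := Finset.sum_range_sub (fun j : ℕ => w j) n
      simp only [g]
      push_cast at this
      exact this.symm
    have hsum2 : w 0 - w (-n) = ∑ j ∈ Finset.range n, g (j - n) := by
      have := Finset.sum_range_sub (fun j : ℕ => w (j - n)) n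
      simp only [g]
      push_cast at this
      simp only [sub_self, zero_sub] at this
      rw [← this]
      refine Finset.sum_congr rfl fun j _ => ?_
      congr 2
      ring
    let bad : Finset ℕ := (Finset.range n).filter fun j => g j ≠ g (j - n)
    let S : Finset ℕ := (Finset.range n).filter fun j =>
      ∃ t ∈ P, ∃ q : ℤ, t + q ∈ Set.uIoc (x (j - n)) (x j + (-p : ℤ))
    have hScard : S.card ≤ P.card := by
      have hch : ∀ j : ℕ, ∃ t : ℝ, j ∈ S → t ∈ P ∧
          ∃ q : ℤ, t + q ∈ Set.uIoc (x (j - n)) (x j + (-p : ℤ)) := by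
        intro j
        by_cases h : j ∈ S
        · obtain ⟨t, h1, h2⟩ := (Finset.mem_filter.1 h).2
          exact ⟨t, fun _ => ⟨h1, h2⟩⟩
        · exact ⟨0, fun h' => absurd h' h⟩
      choose φ hφ using hch
      refine Finset.card_le_card_of_injOn φ (fun j hj => (hφ j hj).1) ?_
      have key : ∀ i j : ℕ, i ∈ S → j ∈ S → φ i = φ j → ¬ i < j := by
        intro i j hi hj hij hlt
        obtain ⟨-, qi, hqi⟩ := hφ i hi
        obtain ⟨-, qj, hqj⟩ := hφ j hj
        rw [← hij] at hqj
        have hjn : j < n := Finset.mem_range.1 (Finset.mem_filter.1 hj).1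
        have hb := hn (j - i) (by omega) (by omega) (qj - qi)
        rw [Nat.cast_sub hlt.le] at hb
        push_cast at hb
        apply absurd hb
        rw [not_lt]
        rcases le_or_gt (n * α - p) 0 with hδ | hδ
        · have e : ∀ i : ℕ, x i + (-p : ℤ) ≤ x (i - n) := by
            intro i
            rcases hδ.lt_or_eq with hδ | hδ
            · have := hord i (i - n) p (by push_cast; linarith)
              push_cast
              linarith
            · exfalso
              rcases Nat.eq_zero_or_pos n with h0 | h0
              · omega
              · exact hα.natCast_mul (m := n) (by omega) ⟨p, by push_cast; linarith⟩
          rw [Set.uIoc_of_ge (e _), Set.mem_Ioc] at hqi hqj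
          have h1 := hord' i (j - n) (qi - qj + p) (by
            push_cast at *
            linarith)
          have h2 := hord' j (i - n) (qj - qi + p) (by
            push_cast at *
            linarith)
          push_cast at h1 h2
          rw [abs_of_nonpos hδ, abs_le]
          constructor <;> linarith
        · have e : ∀ i : ℕ, x (i - n) ≤ x i + (-p : ℤ) := by
            intro i
            exact (hord (i - n) i (-p) (by push_cast; linarith)).le
          rw [Set.uIoc_of_le (e _), Set.mem_Ioc] at hqi hqj
          have h1 := hord' (i - n) j (qi - qj - p) (by
            push_cast at *
            linarith)
          have h2 := hord' (j - n) i (qj - qi - p) (by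
            push_cast at *
            linarith)
          push_cast at h1 h2
          rw [abs_of_pos hδ, abs_le]
          constructor <;> linarith
      intro i hi j hj hij
      have := key i j hi hj hij
      have := key j i hj hi hij.symm
      omega
    have hpre : ∀ d : ℤ, ((Finset.range n).filter fun j : ℕ => (j : ℤ) + d ∈ A).card ≤ A.card := by
      intro d
      refine Finset.card_le_card_of_injOn (fun j : ℕ => (j : ℤ) + d)
        (fun j hj => (Finset.mem_filter.1 hj).2) ?_
      intro i _ j _ hij
      simpa using hij
    have hsub : bad ⊆ S ∪ (((Finset.range n).filter fun j : ℕ => (j : ℤ) + 0 ∈ A) ∪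
        (((Finset.range n).filter fun j : ℕ => (j : ℤ) + 1 ∈ A) ∪
        (((Finset.range n).filter fun j : ℕ => (j : ℤ) + (-n) ∈ A) ∪
        ((Finset.range n).filter fun j : ℕ => (j : ℤ) + (-n + 1) ∈ A)))) := by
      intro j hj
      obtain ⟨hjr, hjg⟩ := Finset.mem_filter.1 hj
      by_contra hnot
      simp only [Finset.mem_union, Finset.mem_filter, hjr, true_and, not_or, S] at hnot
      obtain ⟨h0, h1, h2, h3, h4⟩ := hnot
      apply hjg
      symm
      refine hstep (j - n) j (-p) ((hPL _ _).resolve_left h0) ?_ ?_ ?_ ?_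
      · exact hA _ (by rwa [sub_eq_add_neg])
      · exact hA _ (by rwa [sub_eq_add_neg, add_assoc])
      · exact hA _ (by rwa [add_zero] at h1)
      · exact hA _ h2
    have hbad : bad.card ≤ C := by
      refine (Finset.card_le_card hsub).trans ?_
      have k1 := hpre 0
      have k2 := hpre 1
      have k3 := hpre (-n)
      have k4 := hpre (-n + 1)
      refine (Finset.card_union_le _ _).trans ?_
      refine (Nat.add_le_add_left (Finset.card_union_le _ _) _).trans ?_
      refine (Nat.add_le_add_left (Nat.add_le_add_left (Finset.card_union_le _ _) _) _).trans ?_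
      refine (Nat.add_le_add_left (Nat.add_le_add_left (Nat.add_le_add_left
        (Finset.card_union_le _ _) _) _) _).trans ?_
      simp only [C]
      omega
    have hs : ∑ j ∈ Finset.range n, (g j - g (j - n)) ≤ C * (2 * G) := by
      have e : ∑ j ∈ Finset.range n, (g j - g (j - n)) = ∑ j ∈ bad, (g j - g (j - n)) := by
        symm
        apply Finset.sum_subset (Finset.filter_subset _ _)
        intro j hj hjb
        by_contra hne
        exact hjb (Finset.mem_filter.2 ⟨hj, fun h => hne (by rw [h, sub_self])⟩)
      rw [e]
      calc ∑ j ∈ bad, (g j - g (j - n)) ≤ ∑ j ∈ bad, (2 * G : ℤ) := by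
            refine Finset.sum_le_sum fun j _ => ?_
            have h1 := abs_le.1 (hgb j)
            have h2 := abs_le.1 (hgb (j - n))
            omega
        _ = bad.card * (2 * G : ℤ) := by simp
        _ ≤ C * (2 * G) := by
            have : (bad.card : ℤ) ≤ C := by exact_mod_cast hbad
            exact mul_le_mul_of_nonneg_right this (by positivity)
    rw [Finset.sum_sub_distrib] at hs
    linarith
  -- conclusion
  have hF := hfin (2 * w 0 + C * (2 * G)).toNat
  obtain ⟨M, hM⟩ := hF.bddAbove
  obtain ⟨n, hnM, p, hp⟩ := good_times α hα M.toNat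
  have hb := hmain n p hp
  have : (n : ℤ) ≤ M := by
    apply hM
    simp only [Set.mem_ofPred_eq]
    have h0 : 0 ≤ w (-n) := by simp [w]
    have h1 : ((lev (x n) : ℕ) : ℤ) ≤ 2 * w 0 + C * (2 * G) := by
      change w n ≤ _
      linarith
    omega
  omega

lemma coe_eq_coe_int (a b : ℝ) (h : (a : AddCircle (1:ℝ)) = (b : AddCircle (1:ℝ))) :
    ∃ n : ℤ, a = b + n := by
  have h' : ((a - b : ℝ) : AddCircle (1:ℝ)) = 0 := by
    rw [AddCircle.coe_sub, h, sub_self]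
  obtain ⟨n, hn⟩ := (AddCircle.coe_eq_zero_iff (1:ℝ)).1 h'
  refine ⟨n, ?_⟩
  simp at hn
  linarith

lemma isDyadicPt_coe (r : ℝ) : IsDyadicPt (r : AddCircle (1:ℝ)) ↔ IsDyadic r := by
  constructor
  · rintro ⟨s, hs, h⟩
    obtain ⟨n, rfl⟩ := coe_eq_coe_int _ _ h
    exact (isDyadic_add_int _ _).1 hs
  · intro h
    exact ⟨r, h, rfl⟩

lemma inD_of_dyadic_pair {x y : ℝ} (hx : IsDyadic x) (hy : IsDyadic y) (k : ℤ) :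
    ∃ N : ℕ, |k| ≤ N ∧ ∀ q : ℤ, InD N (y - (2 : ℝ) ^ k * x + q - (2 : ℝ) ^ k * q) := by
  obtain ⟨b, hb⟩ := (isDyadic_iff x).1 hx
  obtain ⟨b', hb'⟩ := (isDyadic_iff y).1 hy
  have hk := le_abs_self k
  have hk' := neg_abs_le k
  refine ⟨b + b' + k.natAbs, by rw [Int.abs_eq_natAbs]; push_cast; omega, fun q => ?_⟩
  have h1 : InD (b + b' + k.natAbs) y := inD_mono (by omega) hb'
  have h2 : InD (b + b' + k.natAbs) ((2 : ℝ) ^ k * x) := inD_zpow (by push_cast; omega) hb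
  have h3 : InD (b + b' + k.natAbs) ((2 : ℝ) ^ k * q) :=
    inD_zpow (b := 0) (by push_cast; omega) (inD_int _ _)
  rw [sub_eq_add_neg, sub_eq_add_neg]
  exact inD_add (inD_add (inD_add h1 (inD_neg h2)) (inD_int _ _)) (inD_neg h3)

lemma plHyp_of (F : CircleDeg1Lift) (m : ℕ) (t : Fin (m + 1) → ℝ)
    (ht0 : t 0 = 0) (ht1 : t (Fin.last m) = 1)
    (hd : ∀ i, IsDyadic (t i) ∧ IsDyadic (F (t i))) (hmono : StrictMono t)
    (hl : ∀ i : Fin m, ∃ k : ℤ, ∃ c : ℝ,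
        ∀ x ∈ Icc (t i.castSucc) (t i.succ), F x = (2 : ℝ) ^ k * x + c) :
    ∃ N P, PLHyp (fun x => F x) N P := by
  classical
  choose k c hkc using hl
  have hN : ∀ i : Fin m, ∃ N : ℕ, |k i| ≤ N ∧ ∀ q : ℤ, InD N (c i + q - (2 : ℝ) ^ (k i) * q) := by
    intro i
    obtain ⟨N, h1, h2⟩ := inD_of_dyadic_pair (hd i.castSucc).1 (hd i.castSucc).2 (k i)
    refine ⟨N, h1, fun q => ?_⟩
    have := h2 q
    rw [hkc i _ (left_mem_Icc.2 (hmono i.castSucc_lt_succ).le)] at this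
    simpa using this
  choose N hN1 hN2 using hN
  obtain ⟨B, hB⟩ := Finite.exists_le N
  refine ⟨B, Finset.univ.image t, ?_⟩
  have hloc : ∀ y : ℝ, 0 ≤ y → y < 1 → ∃ j : Fin m, t j.castSucc ≤ y ∧ y < t j.succ := by
    intro y h0 h1
    have : ∀ i : Fin (m + 1), y < t i → ∃ j : Fin m, t j.castSucc ≤ y ∧ y < t j.succ := by
      intro i
      induction i using Fin.induction with
      | zero => intro h; rw [ht0] at h; linarith
      | succ i ih =>
        intro h
        by_cases h' : y < t i.castSucc
        · exact ih h'
        · exact ⟨i, not_lt.1 h', h⟩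
    exact this (Fin.last m) (by rw [ht1]; exact h1)
  have hle : ∀ a b : ℝ, a ≤ b → (∃ t' ∈ Finset.univ.image t, ∃ q : ℤ, t' + q ∈ Set.uIoc a b) ∨
    ∃ k : ℤ, ∃ c : ℝ, |k| ≤ B ∧ InD B c ∧ F a = (2 : ℝ) ^ k * a + c ∧
      F b = (2 : ℝ) ^ k * b + c := by
    intro a b hab
    obtain ⟨j, hj1, hj2⟩ := hloc (Int.fract a) (Int.fract_nonneg a) (Int.fract_lt_one a)
    have hfr : Int.fract a = a - ⌊a⌋ := rfl
    rw [hfr] at hj1 hj2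
    by_cases hb : t j.succ + ⌊a⌋ ≤ b
    · left
      refine ⟨t j.succ, by simp, ⌊a⌋, ?_⟩
      rw [Set.uIoc_of_le hab]
      exact ⟨by linarith, hb⟩
    · right
      have hF : ∀ y : ℝ, a ≤ y → y ≤ b →
          F y = (2 : ℝ) ^ (k j) * y + (c j + ⌊a⌋ - (2 : ℝ) ^ (k j) * ⌊a⌋) := by
        intro y h1 h2
        have e := hkc j (y - ⌊a⌋) ⟨by linarith, by linarith⟩
        rw [CircleDeg1Lift.map_sub_int] at e
        linear_combination e
      refine ⟨k j, _, (hN1 j).trans (by exact_mod_cast hB j), inD_mono (hB j) (hN2 j ⌊a⌋),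
        hF a le_rfl hab, hF b hab le_rfl⟩
  intro a b
  rcases le_total a b with h | h
  · exact hle a b h
  · rcases hle b a h with h' | ⟨k, c, h1, h2, h3, h4⟩
    · left; rwa [Set.uIoc_comm]
    · exact Or.inr ⟨k, c, h1, h2, h4, h3⟩

/-- Every element of Thompson's group `T` has rational rotation number: for every
`f ∈ T` and every lift `F : ℝ → ℝ` of `f` (a monotone map with `F (x+1) = F x + 1`
whose reduction modulo 1 is `f`), the translation number
`τ(F) = lim_{n→∞} Fⁿ(x)/n` is a rational number. -/
theorem thompsonT_rotation_number_rational :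
    ∀ f : AddCircle (1:ℝ) ≃ₜ AddCircle (1:ℝ), InThompsonT f →
      ∀ F : CircleDeg1Lift,
        (∀ x : ℝ, f (x : AddCircle (1:ℝ)) = ((F x : ℝ) : AddCircle (1:ℝ))) →
        ∃ q : ℚ, F.translationNumber = (q : ℝ) := by
  intro f ⟨hfd, F₀, hmono, ⟨hF1, hFl⟩, m, t, ht, ht0, ht1, hd, hl⟩ F hF
  -- `F` and `F₀` differ by an integer constant
  have hint : ∀ x, ∃ n : ℤ, F x = F₀ x + n := fun x =>
    coe_eq_coe_int _ _ (by rw [← hF, ← hFl])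
  obtain ⟨n₀, hn₀⟩ := hint 0
  have hF₀1 : F₀ 1 = F₀ 0 + 1 := by simpa using hF1 0
  have hF11 : F 1 = F 0 + 1 := by simpa using F.map_add_one 0
  have hIco : ∀ x, 0 ≤ x → x < 1 → F x = F₀ x + n₀ := by
    intro x h0 h1
    rcases h0.eq_or_lt with rfl | h0
    · exact hn₀
    obtain ⟨n, hn⟩ := hint x
    have a1 := hmono h0
    have a2 := hmono h1
    have a3 := F.monotone h0.le
    have a4 := F.monotone h1.le
    have b1 : (n : ℝ) < n₀ + 1 := by linarith
    have b2 : (n₀ : ℝ) < n + 1 := by linarith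
    have c1 : n < n₀ + 1 := by exact_mod_cast b1
    have c2 : n₀ < n + 1 := by exact_mod_cast b2
    obtain rfl : n = n₀ := by omega
    exact hn
  have hF₀nat : ∀ (x : ℝ) (n : ℕ), F₀ (x + n) = F₀ x + n := by
    intro x n
    induction n with
    | zero => simp
    | succ n ih =>
      push_cast
      rw [← add_assoc, hF1, ih, add_assoc]
  have hF₀int : ∀ (x : ℝ) (n : ℤ), F₀ (x + n) = F₀ x + n := by
    intro x n
    obtain ⟨k, rfl | rfl⟩ := n.eq_nat_or_neg
    · exact_mod_cast hF₀nat x k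
    · have := hF₀nat (x + (-(k : ℤ) : ℤ)) k
      push_cast at this ⊢
      rw [neg_add_cancel_right] at this
      linarith
  have hall : ∀ x, F x = F₀ x + n₀ := by
    intro x
    have h := hIco (Int.fract x) (Int.fract_nonneg x) (Int.fract_lt_one x)
    have e : x = Int.fract x + ⌊x⌋ := (Int.fract_add_floor x).symm
    rw [e, CircleDeg1Lift.map_add_int, hF₀int, h]
    ring
  have hbij : Function.Bijective F := by
    constructor
    · intro a b hab
      rw [hall, hall] at hab
      exact hmono.injective (by linarith)
    · intro y
      obtain ⟨z, hz⟩ := f.surjective (y : AddCircle (1:ℝ))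
      obtain ⟨r, rfl⟩ := QuotientAddGroup.mk_surjective z
      have hz' : ((F r : ℝ) : AddCircle (1:ℝ)) = (y : AddCircle (1:ℝ)) := by
        rw [← hF]; exact hz
      obtain ⟨n, hn⟩ := coe_eq_coe_int _ _ hz'
      exact ⟨r - n, by rw [CircleDeg1Lift.map_sub_int, hn]; ring⟩
  obtain ⟨u, rfl⟩ := CircleDeg1Lift.isUnit_iff_bijective.2 hbij
  obtain ⟨N, P, hPL⟩ := plHyp_of (u : CircleDeg1Lift) m t ht0 ht1
    (fun i => ⟨(hd i).1, by rw [hall]; exact (isDyadic_add_int _ _).2 (hd i).2⟩) ht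
    (fun i => by
      obtain ⟨k, c, h⟩ := hl i
      exact ⟨k, c + n₀, fun x hx => by rw [hall, h x hx]; ring⟩)
  refine core u (fun r => ?_) N P hPL
  rw [← isDyadicPt_coe, ← isDyadicPt_coe, ← hF, ← hfd]
end

section
/- (Ghys–Sergiescu) Every rational number is realized as a rotation number in Thompson's group T: for every rational q with 0 ≤ q < 1 there exists an element f of T whose rotation number equals q. -/
open Set

namespace ThT

theorem dy_add {x y : ℝ} (hx : IsDyadic x) (hy : IsDyadic y) : IsDyadic (x + y) := by
  obtain ⟨a, b, rfl⟩ := hx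
  obtain ⟨c, d, rfl⟩ := hy
  refine ⟨a * 2 ^ d + c * 2 ^ b, b + d, ?_⟩
  push_cast
  field_simp
  ring

theorem dy_mul {x y : ℝ} (hx : IsDyadic x) (hy : IsDyadic y) : IsDyadic (x * y) := by
  obtain ⟨a, b, rfl⟩ := hx
  obtain ⟨c, d, rfl⟩ := hy
  refine ⟨a * c, b + d, ?_⟩
  push_cast
  field_simp
  ring

theorem dy_int (z : ℤ) : IsDyadic (z : ℝ) := ⟨z, 0, by simp⟩

theorem dy_zpow (k : ℤ) : IsDyadic ((2 : ℝ) ^ k) := by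
  obtain ⟨m, rfl | rfl⟩ := k.eq_nat_or_neg
  · exact ⟨2 ^ m, 0, by simp⟩
  · exact ⟨1, m, by simp⟩

theorem dy_sub {x y : ℝ} (hx : IsDyadic x) (hy : IsDyadic y) : IsDyadic (x - y) := by
  have := dy_add hx (dy_mul (dy_int (-1)) hy)
  convert this using 1
  push_cast
  ring

/-- Breakpoints. -/
noncomputable def T (n : ℤ) (i : ℤ) : ℝ := ((i / n : ℤ) : ℝ) + (1 - (2 : ℝ) ^ (-(i % n)))

theorem T_dy (n i : ℤ) : IsDyadic (T n i) :=
  dy_add (dy_int _) (dy_sub (by simpa using dy_int 1) (dy_zpow _))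

theorem T_add (n : ℤ) (hn : 0 < n) (i k : ℤ) : T n (i + n * k) = T n i + k := by
  unfold T
  rw [Int.add_mul_ediv_left _ _ hn.ne', Int.add_mul_emod_self_left]
  push_cast
  ring

theorem T_zero (n : ℤ) : T n 0 = 0 := by simp [T]

theorem T_len (n : ℤ) (hn : 0 < n) (i : ℤ) : ∃ k : ℤ, T n (i + 1) - T n i = (2 : ℝ) ^ k := by
  have h0 := Int.emod_nonneg i hn.ne'
  have h1 := Int.emod_lt_of_pos i hn
  have h2 := Int.mul_ediv_add_emod i n
  generalize hr : i % n = r at *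
  generalize hq : i / n = q at *
  by_cases h : r + 1 < n
  · have e : i + 1 = (r + 1) + n * q := by linarith
    refine ⟨-(r + 1), ?_⟩
    rw [e, ← h2, add_comm (n * q) r, T_add n hn, T_add n hn]
    unfold T
    rw [Int.ediv_eq_zero_of_lt (by omega) h, Int.ediv_eq_zero_of_lt h0 h1,
      Int.emod_eq_of_lt (by omega) h, Int.emod_eq_of_lt h0 h1]
    have : (2 : ℝ) ^ (-r) = 2 * (2 : ℝ) ^ (-(r + 1)) := by
      rw [← zpow_one_add₀ (by norm_num)]
      congr 1
      ring
    rw [this]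
    ring
  · have e : i + 1 = 0 + n * (q + 1) := by
      have : r = n - 1 := by omega
      rw [← h2, this]; ring
    refine ⟨-r, ?_⟩
    rw [e, ← h2, add_comm (n * q) r, T_add n hn, T_add n hn, T_zero]
    unfold T
    rw [Int.ediv_eq_zero_of_lt h0 h1, Int.emod_eq_of_lt h0 h1]
    push_cast
    ring

theorem T_lt (n : ℤ) (hn : 0 < n) (i : ℤ) : T n i < T n (i + 1) := by
  obtain ⟨k, hk⟩ := T_len n hn i
  have : (0 : ℝ) < 2 ^ k := by positivity
  linarith

theorem T_mono (n : ℤ) (hn : 0 < n) : StrictMono (T n) :=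
  strictMono_int_of_lt_succ (T_lt n hn)

theorem T_find (n : ℤ) (hn : 0 < n) (x : ℝ) : ∃ i, T n i ≤ x ∧ x < T n (i + 1) := by
  have hk : ∀ k : ℤ, T n (n * k) = k := fun k => by
    have := T_add n hn 0 k
    rwa [T_zero, zero_add, zero_add] at this
  obtain ⟨i, h1, h2⟩ := Int.exists_greatest_of_bdd (P := fun i => T n i ≤ x)
    ⟨n * (⌊x⌋ + 1), fun z hz => by
      apply (T_mono n hn).le_iff_le.1
      rw [hk]
      push_cast
      exact hz.trans (Int.lt_floor_add_one x).le⟩ ⟨n * ⌊x⌋, by rw [hk]; exact Int.floor_le x⟩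
  refine ⟨i, h1, ?_⟩
  by_contra h
  have := h2 (i + 1) (not_lt.1 h)
  omega

/-- Linear interpolation of `T`. -/
noncomputable def g (n : ℤ) (y : ℝ) : ℝ := T n ⌊y⌋ + Int.fract y * (T n (⌊y⌋ + 1) - T n ⌊y⌋)

theorem g_int (n i : ℤ) : g n i = T n i := by simp [g]

theorem g_add (n i : ℤ) (s : ℝ) (h0 : 0 ≤ s) (h1 : s ≤ 1) :
    g n (i + s) = T n i + s * (T n (i + 1) - T n i) := by
  rcases h1.eq_or_lt with rfl | h1
  · have : (i : ℝ) + 1 = ((i + 1 : ℤ) : ℝ) := by push_cast; rfl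
    rw [this, g_int]; ring
  · have hf : ⌊(i : ℝ) + s⌋ = i := by
      rw [Int.floor_eq_iff]; constructor <;> linarith
    unfold g
    rw [Int.fract, hf]
    ring

theorem g_period (n : ℤ) (hn : 0 < n) (y : ℝ) (k : ℤ) : g n (y + (n * k : ℤ)) = g n y + k := by
  unfold g
  rw [Int.floor_add_intCast, Int.fract_add_intCast, add_right_comm, T_add n hn, T_add n hn]
  ring

theorem g_mono (n : ℤ) (hn : 0 < n) : StrictMono (g n) := by
  intro x y hxy
  have a1 := T_lt n hn ⌊x⌋
  have a2 := T_lt n hn ⌊y⌋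
  have b1 := Int.fract_lt_one x
  have b2 := Int.fract_nonneg y
  rcases (Int.floor_mono hxy.le).eq_or_lt with h | h
  · unfold g
    rw [← h]
    have : Int.fract x < Int.fract y := by
      unfold Int.fract; rw [h]; linarith
    nlinarith
  · have := (T_mono n hn).monotone (show ⌊x⌋ + 1 ≤ ⌊y⌋ by omega)
    unfold g
    nlinarith

theorem exists_s (n : ℤ) (hn : 0 < n) (i : ℤ) (x : ℝ) (h0 : T n i ≤ x) (h1 : x ≤ T n (i + 1)) :
    ∃ s : ℝ, 0 ≤ s ∧ s ≤ 1 ∧ s * (T n (i + 1) - T n i) = x - T n i ∧ g n (i + s) = x := by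
  have a := T_lt n hn i
  have hp : 0 < T n (i + 1) - T n i := by linarith
  have h0' : 0 ≤ (x - T n i) / (T n (i + 1) - T n i) := div_nonneg (by linarith) hp.le
  have h1' : (x - T n i) / (T n (i + 1) - T n i) ≤ 1 := by rw [div_le_one hp]; linarith
  have e : (x - T n i) / (T n (i + 1) - T n i) * (T n (i + 1) - T n i) = x - T n i :=
    div_mul_cancel₀ _ hp.ne'
  refine ⟨_, h0', h1', e, ?_⟩
  rw [g_add n i _ h0' h1', e]
  ring

theorem g_surj (n : ℤ) (hn : 0 < n) : Function.Surjective (g n) := by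
  intro x
  obtain ⟨i, h0, h1⟩ := T_find n hn x
  obtain ⟨s, -, -, -, h⟩ := exists_s n hn i x h0 h1.le
  exact ⟨_, h⟩

/-- `g` as an order isomorphism. -/
noncomputable def G (n : ℤ) (hn : 0 < n) : ℝ ≃o ℝ :=
  StrictMono.orderIsoOfSurjective (g n) (g_mono n hn) (g_surj n hn)

/-- The lift. -/
noncomputable def Φ (n : ℤ) (hn : 0 < n) (p : ℤ) (x : ℝ) : ℝ := g n ((G n hn).symm x + p)

variable (n : ℤ) (hn : 0 < n)

theorem Φ_g (p : ℤ) (y : ℝ) : Φ n hn p (g n y) = g n (y + p) := by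
  unfold Φ
  congr 2
  exact (G n hn).symm_apply_apply y

theorem Φ_neg (p : ℤ) (x : ℝ) : Φ n hn (-p) (Φ n hn p x) = x := by
  obtain ⟨y, rfl⟩ := g_surj n hn x
  rw [Φ_g, Φ_g]
  congr 1
  push_cast
  ring

theorem Φ_neg' (p : ℤ) (x : ℝ) : Φ n hn p (Φ n hn (-p) x) = x := by
  simpa using Φ_neg n hn (-p) x

theorem Φ_mono (p : ℤ) : StrictMono (Φ n hn p) := by
  intro x y h
  apply g_mono n hn
  have := (G n hn).symm.strictMono h
  linarith

theorem Φ_cont (p : ℤ) : Continuous (Φ n hn p) :=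
  (Φ_mono n hn p).monotone.continuous_of_surjective
    (fun x => ⟨Φ n hn (-p) x, Φ_neg' n hn p x⟩)

theorem Φ_add (p : ℤ) (x : ℝ) (k : ℤ) : Φ n hn p (x + k) = Φ n hn p x + k := by
  obtain ⟨y, rfl⟩ := g_surj n hn x
  rw [← g_period n hn, Φ_g, Φ_g, add_right_comm, g_period n hn]

theorem Φ_aff (p i : ℤ) : ∃ k : ℤ, ∀ x ∈ Icc (T n i) (T n (i + 1)),
    Φ n hn p x = (2 : ℝ) ^ k * x + (T n (i + p) - (2 : ℝ) ^ k * T n i) := by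
  obtain ⟨k, hk⟩ := T_len n hn i
  obtain ⟨l, hl⟩ := T_len n hn (i + p)
  refine ⟨l - k, fun x hx => ?_⟩
  obtain ⟨s, h0, h1, hs, rfl⟩ := exists_s n hn i x hx.1 hx.2
  have e : (i : ℝ) + s + p = ((i + p : ℤ) : ℝ) + s := by push_cast; ring
  rw [Φ_g, e, g_add n (i + p) s h0 h1, hl, g_add n i s h0 h1, hk, zpow_sub₀ (by norm_num)]
  have : (2 : ℝ) ^ k ≠ 0 := by positivity
  field_simp
  ring

theorem Φ_dy (p : ℤ) (x : ℝ) (hx : IsDyadic x) : IsDyadic (Φ n hn p x) := by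
  obtain ⟨i, h0, h1⟩ := T_find n hn x
  obtain ⟨k, hk⟩ := Φ_aff n hn p i
  rw [hk x ⟨h0, h1.le⟩]
  exact dy_add (dy_mul (dy_zpow _) hx) (dy_sub (T_dy _ _) (dy_mul (dy_zpow _) (T_dy _ _)))

theorem coe_eq {x y : ℝ} : (x : AddCircle (1:ℝ)) = y ↔ ∃ k : ℤ, y = x + k := by
  rw [eq_comm, ← sub_eq_zero, ← AddCircle.coe_sub, AddCircle.coe_eq_zero_iff]
  constructor
  · rintro ⟨k, hk⟩
    exact ⟨k, by simp at hk; linarith⟩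
  · rintro ⟨k, hk⟩
    exact ⟨k, by simp; linarith⟩

/-- The circle map. -/
noncomputable def cm (p : ℤ) : AddCircle (1:ℝ) → AddCircle (1:ℝ) :=
  Quotient.lift (fun x : ℝ => ((Φ n hn p x : ℝ) : AddCircle (1:ℝ))) (by
    intro a b hab
    have : (a : AddCircle (1:ℝ)) = b := Quotient.sound hab
    obtain ⟨k, rfl⟩ := coe_eq.1 this
    exact coe_eq.2 ⟨k, Φ_add n hn p a k⟩)

theorem cm_coe (p : ℤ) (x : ℝ) :
    cm n hn p (x : AddCircle (1:ℝ)) = ((Φ n hn p x : ℝ) : AddCircle (1:ℝ)) := rfl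

theorem cm_cont (p : ℤ) : Continuous (cm n hn p) :=
  Continuous.quotient_lift ((AddCircle.continuous_mk' (1:ℝ)).comp (Φ_cont n hn p)) _

/-- The circle homeomorphism. -/
noncomputable def H (p : ℤ) : AddCircle (1:ℝ) ≃ₜ AddCircle (1:ℝ) where
  toFun := cm n hn p
  invFun := cm n hn (-p)
  left_inv x := by
    obtain ⟨x, rfl⟩ := QuotientAddGroup.mk_surjective x
    rw [cm_coe, cm_coe, Φ_neg]
  right_inv x := by
    obtain ⟨x, rfl⟩ := QuotientAddGroup.mk_surjective x
    rw [cm_coe, cm_coe, Φ_neg']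
  continuous_toFun := cm_cont n hn p
  continuous_invFun := cm_cont n hn (-p)

theorem H_coe (p : ℤ) (x : ℝ) :
    H n hn p (x : AddCircle (1:ℝ)) = ((Φ n hn p x : ℝ) : AddCircle (1:ℝ)) := rfl

theorem cm_dy (p : ℤ) (x : AddCircle (1:ℝ)) (hx : IsDyadicPt x) : IsDyadicPt (cm n hn p x) := by
  obtain ⟨r, hr, rfl⟩ := hx
  exact ⟨_, Φ_dy n hn p r hr, rfl⟩

theorem Φ_one (p : ℤ) (x : ℝ) : Φ n hn p (x + 1) = Φ n hn p x + 1 := by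
  simpa using Φ_add n hn p x 1

theorem H_mem (m : ℕ) (hm : (0 : ℤ) < m) (p : ℤ) : InThompsonT (H m hm p) := by
  refine ⟨fun x => ⟨cm_dy m hm p x, fun h => ?_⟩, Φ m hm p, Φ_mono m hm p,
    ⟨Φ_one m hm p, H_coe m hm p⟩, m, fun i => T m (i : ℕ), ?_, ?_, ?_, ?_, ?_⟩
  · have := cm_dy m hm (-p) _ h
    rwa [show cm m hm (-p) (H m hm p x) = x from (H m hm p).left_inv x] at this
  · intro i j hij
    apply T_mono m hm
    exact_mod_cast hij
  · simp [T_zero]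
  · have := T_add m hm 0 1
    simpa [T_zero] using this
  · exact fun i => ⟨T_dy _ _, Φ_dy _ _ _ _ (T_dy _ _)⟩
  · intro i
    obtain ⟨k, hk⟩ := Φ_aff m hm p (i : ℕ)
    refine ⟨k, _, fun x hx => hk x ?_⟩
    simpa using hx

theorem lift_eq (p : ℤ) (F : CircleDeg1Lift)
    (hF : ∀ x : ℝ, H n hn p (x : AddCircle (1:ℝ)) = ((F x : ℝ) : AddCircle (1:ℝ))) :
    ∃ k : ℤ, ∀ x, F x = Φ n hn p x + k := by
  have hk : ∀ x, ∃ k : ℤ, F x = Φ n hn p x + k := fun x =>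
    coe_eq.1 (by rw [← H_coe]; exact hF x)
  obtain ⟨k, hk0⟩ := hk 0
  refine ⟨k, fun x => ?_⟩
  have key : F (Int.fract x) = Φ n hn p (Int.fract x) + k := by
    rcases (Int.fract_nonneg x).eq_or_lt with h | h
    · rw [← h, hk0]
    · obtain ⟨l, hl⟩ := hk (Int.fract x)
      have a1 := F.monotone h.le
      have a2 := F.monotone (Int.fract_lt_one x).le
      have a3 := F.map_add_one 0
      have b1 := Φ_mono n hn p h
      have b2 := Φ_mono n hn p (Int.fract_lt_one x)
      have b3 := Φ_one n hn p 0
      rw [zero_add] at a3 b3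
      have c1 : (l : ℝ) < k + 1 := by linarith
      have c2 : (k : ℝ) < l + 1 := by linarith
      have : l = k := by
        have c1' : l < k + 1 := by exact_mod_cast c1
        have c2' : k < l + 1 := by exact_mod_cast c2
        omega
      rw [hl, this]
  have e := Int.fract_add_floor x
  rw [← e, F.map_add_int, Φ_add, key]
  ring

theorem iter (p : ℤ) (F : CircleDeg1Lift) (k : ℤ) (hF : ∀ x, F x = Φ n hn p x + k) (j : ℕ) :
    (F ^ j) 0 = g n ((j * p : ℤ) : ℝ) + (j * k : ℤ) := by
  induction j with
  | zero => simp [g, T_zero]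
  | succ j ih =>
    rw [pow_succ', CircleDeg1Lift.mul_apply, ih, F.map_add_int, hF, Φ_g]
    push_cast
    rw [show (j : ℝ) * p + p = (j + 1) * p by ring]
    ring

end ThT

/-- (Ghys–Sergiescu) Every rational number is realized as a rotation number in
Thompson's group `T`: for every rational `q` with `0 ≤ q < 1` there is an element `f`
of `T` whose rotation number equals `q`, i.e. every lift of `f` has translation number
`q + m` for some integer `m` (and `f` does admit a lift). -/
theorem thompsonT_realizes_rational_rotation_numbers :
    ∀ q : ℚ, 0 ≤ q → q < 1 →
      ∃ f : AddCircle (1:ℝ) ≃ₜ AddCircle (1:ℝ), InThompsonT f ∧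
        (∃ F : CircleDeg1Lift,
          ∀ x : ℝ, f (x : AddCircle (1:ℝ)) = ((F x : ℝ) : AddCircle (1:ℝ))) ∧
        ∀ F : CircleDeg1Lift,
          (∀ x : ℝ, f (x : AddCircle (1:ℝ)) = ((F x : ℝ) : AddCircle (1:ℝ))) →
          ∃ m : ℤ, F.translationNumber = (q : ℝ) + m := by
  intro q _ _
  have hm : (0 : ℤ) < q.den := by exact_mod_cast q.pos
  refine ⟨ThT.H q.den hm q.num, ThT.H_mem q.den hm q.num,
    ⟨⟨⟨ThT.Φ q.den hm q.num, (ThT.Φ_mono q.den hm q.num).monotone⟩, ThT.Φ_one q.den hm q.num⟩,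
      fun x => rfl⟩, fun F hF => ?_⟩
  obtain ⟨k, hk⟩ := ThT.lift_eq q.den hm q.num F hF
  refine ⟨k, ?_⟩
  have h := ThT.iter q.den hm q.num F k hk q.den
  have h2 := ThT.g_period q.den hm 0 q.num
  have h3 : ThT.g q.den 0 = 0 := by simp [ThT.g, ThT.T_zero]
  rw [zero_add, h3] at h2
  rw [h2] at h
  have h4 : (F ^ q.den) 0 = 0 + ((q.num + q.den * k : ℤ) : ℝ) := by
    rw [h]; push_cast; ring
  rw [CircleDeg1Lift.translationNumber_of_map_pow_eq_add_int F h4 q.pos]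
  have hd : (q.den : ℝ) ≠ 0 := by exact_mod_cast q.pos.ne'
  rw [Rat.cast_def]
  push_cast
  field_simp
end

section
/- (Burillo–Cleary–Stein–Taback) There is a sequence (c_n)_{n≥1} of elements of Thompson's group T such that c_n has order exactly n and every torsion element of T is conjugate in T to a power of c_n for some n: for every f in T of finite order there exist a positive integer n and an integer k with f conjugate in T to c_n^k. -/
open Set

open Filter Topology

namespace ThompsonAux

lemma dy_int (n : ℤ) : IsDyadic (n : ℝ) := ⟨n, 0, by simp⟩

lemma dy_neg {x : ℝ} (h : IsDyadic x) : IsDyadic (-x) := by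
  obtain ⟨a, b, rfl⟩ := h
  exact ⟨-a, b, by push_cast; ring⟩

lemma dy_add {x y : ℝ} (hx : IsDyadic x) (hy : IsDyadic y) : IsDyadic (x + y) := by
  obtain ⟨a, b, rfl⟩ := hx
  obtain ⟨c, d, rfl⟩ := hy
  refine ⟨a * 2 ^ d + c * 2 ^ b, b + d, ?_⟩
  push_cast
  rw [pow_add]
  field_simp

lemma dy_sub {x y : ℝ} (hx : IsDyadic x) (hy : IsDyadic y) : IsDyadic (x - y) := by
  rw [sub_eq_add_neg]; exact dy_add hx (dy_neg hy)

lemma dy_zpow_mul (k : ℤ) {x : ℝ} (hx : IsDyadic x) : IsDyadic ((2 : ℝ) ^ k * x) := by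
  obtain ⟨a, b, rfl⟩ := hx
  obtain ⟨n, rfl | rfl⟩ := k.eq_nat_or_neg
  · refine ⟨2 ^ n * a, b, ?_⟩
    push_cast
    rw [zpow_natCast]
    ring
  · refine ⟨a, b + n, ?_⟩
    rw [zpow_neg, zpow_natCast, pow_add]
    field_simp

lemma dy_zpow_mul_iff (k : ℤ) {x : ℝ} : IsDyadic ((2 : ℝ) ^ k * x) ↔ IsDyadic x := by
  refine ⟨fun h => ?_, dy_zpow_mul k⟩
  have := dy_zpow_mul (-k) h
  rwa [← mul_assoc, ← zpow_add₀ (by norm_num), neg_add_cancel, zpow_zero, one_mul] at this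

lemma dy_add_iff {x c : ℝ} (hc : IsDyadic c) : IsDyadic (x + c) ↔ IsDyadic x := by
  refine ⟨fun h => ?_, fun h => dy_add h hc⟩
  have := dy_sub h hc
  rwa [add_sub_cancel_right] at this

/-- `F` is dyadic affine along the filter `l`. -/
def DA (F : ℝ → ℝ) (l : Filter ℝ) : Prop :=
  ∃ k : ℤ, ∃ c : ℝ, IsDyadic c ∧ ∀ᶠ y in l, F y = (2 : ℝ) ^ k * y + c

/-- local piecewise dyadic affine maps -/
def PL (F : ℝ → ℝ) : Prop :=
  ∀ x, DA F (𝓝[≥] x) ∧ DA F (𝓝[≤] x) ∧ (¬ IsDyadic x → DA F (𝓝 x))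

lemma DA.mono {F : ℝ → ℝ} {l l' : Filter ℝ} (h : DA F l) (hl : l' ≤ l) : DA F l' := by
  obtain ⟨k, c, hc, h⟩ := h
  exact ⟨k, c, hc, hl h⟩

lemma DA.congr {F G : ℝ → ℝ} {l : Filter ℝ} (h : DA F l) (hl : ∀ᶠ y in l, G y = F y) : DA G l := by
  obtain ⟨k, c, hc, h⟩ := h
  exact ⟨k, c, hc, by filter_upwards [h, hl] with y h1 h2; rw [h2, h1]⟩

lemma DA.comp {F G : ℝ → ℝ} {l l' : Filter ℝ} (hG : DA G l') (hF : DA F l)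
    (ht : Tendsto F l l') : DA (fun x => G (F x)) l := by
  obtain ⟨k, c, hc, h⟩ := hF
  obtain ⟨k', c', hc', h'⟩ := hG
  refine ⟨k' + k, 2 ^ k' * c + c', dy_add (dy_zpow_mul _ hc) hc', ?_⟩
  filter_upwards [h, ht.eventually h'] with y h1 h2
  rw [h2, h1, zpow_add₀ (by norm_num)]
  ring

lemma DA.inv {F : ℝ ≃o ℝ} {l l' : Filter ℝ} (hF : DA F l)
    (ht : Tendsto F.symm l' l) : DA F.symm l' := by
  obtain ⟨k, c, hc, h⟩ := hF
  refine ⟨-k, -(2 ^ (-k) * c), dy_neg (dy_zpow_mul _ hc), ?_⟩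
  filter_upwards [ht.eventually h] with y h1
  rw [OrderIso.apply_symm_apply] at h1
  have : (2 : ℝ) ^ (-k) * y = F.symm y + 2 ^ (-k) * c := by
    conv_lhs => rw [h1]
    rw [mul_add, ← mul_assoc, ← zpow_add₀ (by norm_num), neg_add_cancel, zpow_zero, one_mul]
  linarith

lemma DA.of_Icc {F : ℝ → ℝ} {a b : ℝ} {k : ℤ} {c : ℝ} (hc : IsDyadic c)
    (h : ∀ x ∈ Icc a b, F x = (2 : ℝ) ^ k * x + c) :
    (∀ x, a ≤ x → x < b → DA F (𝓝[≥] x)) ∧ (∀ x, a < x → x ≤ b → DA F (𝓝[≤] x)) ∧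
      ∀ x, a < x → x < b → DA F (𝓝 x) := by
  refine ⟨fun x h1 h2 => ⟨k, c, hc, ?_⟩, fun x h1 h2 => ⟨k, c, hc, ?_⟩,
    fun x h1 h2 => ⟨k, c, hc, ?_⟩⟩
  · filter_upwards [Icc_mem_nhdsGE h2] with y hy
    exact h y ⟨h1.trans hy.1, hy.2⟩
  · filter_upwards [Icc_mem_nhdsLE h1] with y hy
    exact h y ⟨hy.1, hy.2.trans h2⟩
  · filter_upwards [Icc_mem_nhds h1 h2] with y hy
    exact h y hy

lemma PL.dy_iff {F : ℝ → ℝ} (h : PL F) (x : ℝ) : IsDyadic (F x) ↔ IsDyadic x := by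
  obtain ⟨k, c, hc, h⟩ := (h x).1
  rw [h.self_of_nhdsWithin (by simp), dy_add_iff hc, dy_zpow_mul_iff]

lemma tends_ge (F : ℝ ≃o ℝ) (x : ℝ) : Tendsto F (𝓝[≥] x) (𝓝[≥] F x) :=
  F.continuous.continuousWithinAt.tendsto_nhdsWithin fun _ hy => F.monotone hy

lemma tends_le (F : ℝ ≃o ℝ) (x : ℝ) : Tendsto F (𝓝[≤] x) (𝓝[≤] F x) :=
  F.continuous.continuousWithinAt.tendsto_nhdsWithin fun _ hy => F.monotone hy

/-- The group of all piecewise dyadic affine homeomorphisms of the line. -/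
def G : Subgroup (ℝ ≃o ℝ) where
  carrier := {F | PL F}
  one_mem' := by
    intro x
    have : ∀ l, DA (fun y : ℝ => y) l := fun l =>
      ⟨0, 0, ⟨0, 0, by simp⟩, Eventually.of_forall fun y => by simp⟩
    exact ⟨this _, this _, fun _ => this _⟩
  mul_mem' := by
    intro a b ha hb x
    have hb' := hb x
    have ha' := ha (b x)
    refine ⟨ha'.1.comp hb'.1 (tends_ge b x), ha'.2.1.comp hb'.2.1 (tends_le b x), fun hx => ?_⟩
    exact (ha'.2.2 (by rwa [PL.dy_iff hb])).comp (hb'.2.2 hx) b.continuous.continuousAt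
  inv_mem' := by
    intro a ha x
    have h := ha (a.symm x)
    have hd := PL.dy_iff ha (a.symm x)
    rw [OrderIso.apply_symm_apply] at hd
    refine ⟨h.1.inv (tends_ge a.symm x), h.2.1.inv (tends_le a.symm x), fun hx => ?_⟩
    exact (h.2.2 (by rwa [← hd])).inv a.symm.continuous.continuousAt

lemma mem_G {F : ℝ ≃o ℝ} : F ∈ G ↔ PL F := Iff.rfl

/-- shift by one -/
noncomputable def S : ℝ ≃o ℝ := OrderIso.addRight 1

lemma S_apply (x : ℝ) : S x = x + 1 := rfl

lemma S_zpow (n : ℤ) (x : ℝ) : (S ^ n) x = x + n := by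
  induction n with
  | zero => simp
  | succ n ih =>
    rw [add_comm, zpow_one_add, RelIso.mul_apply, S_apply, ih]
    push_cast; ring
  | pred n ih =>
    rw [sub_eq_neg_add, zpow_add, zpow_neg_one, RelIso.mul_apply, ih]
    apply S.injective
    rw [RelIso.apply_inv_self, S_apply]
    push_cast; ring

lemma S_mem : S ∈ G := by
  intro x
  have : ∀ l, DA S l := fun l =>
    ⟨0, 1, ⟨1, 0, by simp⟩, Eventually.of_forall fun y => by simp [S_apply]⟩
  exact ⟨this _, this _, fun _ => this _⟩

/-- doubling -/
noncomputable def Dbl : ℝ ≃o ℝ := OrderIso.mulRight₀ 2 (by norm_num)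

lemma Dbl_apply (x : ℝ) : Dbl x = x * 2 := rfl

lemma Dbl_mem : Dbl ∈ G := by
  intro x
  have : ∀ l, DA Dbl l := fun l =>
    ⟨1, 0, ⟨0, 0, by simp⟩, Eventually.of_forall fun y => by simp [Dbl_apply, mul_comm]⟩
  exact ⟨this _, this _, fun _ => this _⟩

/-- identity on the left, doubling on the right -/
noncomputable def Mu : ℝ ≃o ℝ where
  toFun x := max x (2 * x)
  invFun x := min x (x / 2)
  left_inv x := by
    rcases le_total 0 x with h | h
    · simp only [max_eq_right (by linarith : x ≤ 2 * x)]
      rw [min_eq_right (by linarith)]; ring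
    · simp only [max_eq_left (by linarith : 2 * x ≤ x)]
      rw [min_eq_left (by linarith)]
  right_inv x := by
    rcases le_total 0 x with h | h
    · simp only [min_eq_right (by linarith : x / 2 ≤ x)]
      rw [max_eq_right (by linarith)]; ring
    · simp only [min_eq_left (by linarith : x ≤ x / 2)]
      rw [max_eq_left (by linarith)]
  map_rel_iff' := by
    intro a b
    simp only [Equiv.coe_fn_mk, max_le_iff, le_max_iff]
    constructor
    · rintro (⟨h, h'⟩ | ⟨h, h'⟩) <;> linarith
    · intro h
      rcases le_total 0 b with hb | hb
      · exact Or.inr ⟨by linarith, by linarith⟩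
      · exact Or.inl ⟨by linarith, by linarith⟩

lemma Mu_apply (x : ℝ) : Mu x = max x (2 * x) := rfl

lemma Mu_mem : Mu ∈ G := by
  intro x
  have h1 : ∀ a b : ℝ, 0 ≤ a → ∀ x ∈ Icc a b, Mu x = (2 : ℝ) ^ (1 : ℤ) * x + 0 := by
    intro a b ha x hx
    have := ha.trans hx.1
    rw [Mu_apply, max_eq_right (by linarith)]; simp
  have h2 : ∀ a b : ℝ, b ≤ 0 → ∀ x ∈ Icc a b, Mu x = (2 : ℝ) ^ (0 : ℤ) * x + 0 := by
    intro a b ha x hx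
    have := hx.2.trans ha
    rw [Mu_apply, max_eq_left (by linarith)]; simp
  have d0 : IsDyadic 0 := ⟨0, 0, by simp⟩
  refine ⟨?_, ?_, fun hx => ?_⟩
  · rcases le_or_gt 0 x with h | h
    · exact (DA.of_Icc d0 (h1 x (x + 1) h)).1 x le_rfl (by linarith)
    · exact (DA.of_Icc d0 (h2 x 0 le_rfl)).1 x le_rfl (by linarith)
  · rcases lt_or_ge 0 x with h | h
    · exact (DA.of_Icc d0 (h1 0 x le_rfl)).2.1 x h le_rfl
    · exact (DA.of_Icc d0 (h2 (x - 1) x h)).2.1 x (by linarith) le_rfl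
  · rcases lt_trichotomy 0 x with h | h | h
    · exact (DA.of_Icc d0 (h1 0 (x + 1) le_rfl)).2.2 x h (by linarith)
    · exact absurd (h ▸ d0) hx
    · exact (DA.of_Icc d0 (h2 (x - 1) 0 le_rfl)).2.2 x (by linarith) h

lemma exists_stretch_nat (a : ℕ) : ∃ φ ∈ G, φ 0 = 0 ∧ φ 1 = (a : ℝ) + 1 := by
  induction a with
  | zero => exact ⟨1, G.one_mem, rfl, by simp⟩
  | succ a ih =>
    obtain ⟨φ, hφ, h0, h1⟩ := ih
    refine ⟨S ^ (a : ℤ) * Mu * S ^ (-(a : ℤ)) * φ, ?_, ?_, ?_⟩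
    · exact G.mul_mem (G.mul_mem (G.mul_mem (G.zpow_mem S_mem _) Mu_mem) (G.zpow_mem S_mem _)) hφ
    · simp only [RelIso.mul_apply, h0, S_zpow, Mu_apply]
      have : (0 : ℝ) ≤ a := Nat.cast_nonneg a
      push_cast
      rw [max_eq_left (by linarith)]; ring
    · simp only [RelIso.mul_apply, h1, S_zpow, Mu_apply]
      push_cast
      rw [max_eq_right (by linarith)]; ring

lemma exists_stretch {b : ℝ} (hb : IsDyadic b) (hpos : 0 < b) :
    ∃ φ ∈ G, φ 0 = 0 ∧ φ 1 = b := by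
  obtain ⟨a, n, rfl⟩ := hb
  have ha : 0 < a := by
    by_contra h
    have : (a : ℝ) ≤ 0 := by exact_mod_cast not_lt.1 h
    have := div_nonpos_of_nonpos_of_nonneg this (by positivity : (0 : ℝ) ≤ 2 ^ n)
    linarith
  obtain ⟨m, rfl⟩ : ∃ m : ℕ, a = (m : ℤ) + 1 := ⟨(a - 1).toNat, by omega⟩
  clear hpos
  induction n with
  | zero => simpa using exists_stretch_nat m
  | succ n ih =>
    obtain ⟨φ, hφ, h0, h1⟩ := ih
    refine ⟨Dbl⁻¹ * φ, G.mul_mem (G.inv_mem Dbl_mem) hφ, ?_, ?_⟩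
    · apply Dbl.injective
      rw [RelIso.mul_apply, RelIso.apply_inv_self, h0, Dbl_apply]; ring
    · apply Dbl.injective
      rw [RelIso.mul_apply, RelIso.apply_inv_self, h1, Dbl_apply, pow_succ]; field_simp

lemma coe_pow (u : ℝ ≃o ℝ) (n : ℕ) : ⇑(u ^ n) = u^[n] := by
  induction n with
  | zero => rfl
  | succ n ih =>
    rw [pow_succ, Function.iterate_succ, ← ih]; rfl

lemma S_pow (n : ℕ) (x : ℝ) : (S ^ n) x = x + n := by
  rw [← zpow_natCast, S_zpow]; simp

/-- roots of positive translations are conjugate to the unit translation -/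
lemma exists_conj {u : ℝ ≃o ℝ} (hu : u ∈ G) {q r : ℕ} (hq : 0 < q) (hr : 0 < r)
    (h : u ^ q = S ^ r) : ∃ Φ ∈ G, Φ * S = u * Φ := by
  have h0 : 0 < u 0 := by
    have hc : Function.Commute id (u : ℝ → ℝ) := fun x => rfl
    refine (hc.iterate_pos_lt_iff_map_lt monotone_id u.strictMono (x := (0 : ℝ)) hq).1 ?_
    rw [← coe_pow, h, S_pow]
    simpa using hr
  have hd : IsDyadic (u 0) := by
    rw [PL.dy_iff hu]; exact ⟨0, 0, by simp⟩
  obtain ⟨φ, hφ, φ0, φ1⟩ := exists_stretch hd h0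
  have hmul : ∀ (n : ℤ) (x : ℝ), (u ^ (n + 1)) x = (u ^ n) (u x) := by
    intro n x; rw [zpow_add_one]; rfl
  have hmul' : ∀ (n : ℤ) (x : ℝ), (u ^ (n + 1)) x = u ((u ^ n) x) := by
    intro n x; rw [add_comm, zpow_one_add]; rfl
  have horb : StrictMono fun n : ℤ => (u ^ n) 0 := by
    apply strictMono_int_of_lt_succ
    intro n
    rw [hmul]
    exact (u ^ n).strictMono h0
  have hun : ∀ n : ℤ, (u ^ ((q : ℤ) * n)) 0 = r * n := by
    intro n
    rw [zpow_mul, zpow_natCast, h, ← zpow_natCast, ← zpow_mul, S_zpow]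
    push_cast; ring
  have hr1 : (1 : ℝ) ≤ r := by exact_mod_cast hr
  have hex : ∀ y : ℝ, ∃ n : ℤ, (u ^ n) 0 ≤ y ∧ y < (u ^ (n + 1)) 0 := by
    intro y
    have hbd : ∃ b : ℤ, ∀ z : ℤ, (u ^ z) 0 ≤ y → z ≤ b := by
      obtain ⟨N, hN⟩ := exists_nat_gt y
      refine ⟨q * N, fun z hz => ?_⟩
      have h1 := hun N
      have h2 : y < (u ^ ((q : ℤ) * N)) 0 := by
        rw [h1]; push_cast
        have : (0 : ℝ) ≤ N := Nat.cast_nonneg N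
        nlinarith
      exact (horb.lt_iff_lt.1 (hz.trans_lt h2)).le
    have hne : ∃ z : ℤ, (u ^ z) 0 ≤ y := by
      obtain ⟨N, hN⟩ := exists_nat_gt (-y)
      refine ⟨q * (-N : ℤ), ?_⟩
      rw [hun]; push_cast
      have : (0 : ℝ) ≤ N := Nat.cast_nonneg N
      nlinarith
    obtain ⟨n, hn, hmax⟩ := Int.exists_greatest_of_bdd hbd hne
    refine ⟨n, hn, ?_⟩
    by_contra hcon
    have := hmax (n + 1) (not_lt.1 hcon)
    omega
  let Φ : ℝ → ℝ := fun x => (u ^ ⌊x⌋) (φ (Int.fract x))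
  have hΦ : ∀ (n : ℤ) (x : ℝ), (n : ℝ) ≤ x → x < n + 1 → Φ x = (u ^ n * φ * S ^ (-n)) x := by
    intro n x h1 h2
    have : ⌊x⌋ = n := Int.floor_eq_iff.2 ⟨h1, h2⟩
    simp only [Φ, this, Int.fract, RelIso.mul_apply, S_zpow]
    push_cast; rfl
  have hΦend : ∀ n : ℤ, Φ ((n : ℝ) + 1) = (u ^ n * φ * S ^ (-n)) ((n : ℝ) + 1) := by
    intro n
    rw [hΦ (n + 1) _ (by push_cast; rfl) (by push_cast; linarith)]
    simp only [RelIso.mul_apply, S_zpow]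
    push_cast
    rw [show (n : ℝ) + 1 + -(n + 1) = 0 by ring, show (n : ℝ) + 1 + -n = 1 by ring, φ0, φ1, hmul]
  have hΦ' : ∀ (n : ℤ) (x : ℝ), (n : ℝ) ≤ x → x ≤ n + 1 → Φ x = (u ^ n * φ * S ^ (-n)) x := by
    intro n x h1 h2
    rcases h2.lt_or_eq with h2 | rfl
    · exact hΦ n x h1 h2
    · exact hΦend n
  have hΦlo : ∀ x, (u ^ ⌊x⌋) 0 ≤ Φ x := by
    intro x
    apply (u ^ ⌊x⌋).monotone
    rw [← φ0]; exact φ.monotone (Int.fract_nonneg x)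
  have hΦhi : ∀ x, Φ x < (u ^ (⌊x⌋ + 1)) 0 := by
    intro x
    rw [hmul]
    apply (u ^ ⌊x⌋).strictMono
    rw [← φ1]; exact φ.strictMono (Int.fract_lt_one x)
  have hmono : StrictMono Φ := by
    intro x y hxy
    rcases (Int.floor_mono hxy.le).lt_or_eq with hlt | heq
    · exact (hΦhi x).trans_le ((horb.monotone (Int.add_one_le_iff.2 hlt)).trans (hΦlo y))
    · rw [hΦ ⌊x⌋ x (Int.floor_le x) (Int.lt_floor_add_one x),
        hΦ ⌊x⌋ y (by rw [heq]; exact Int.floor_le y) (by rw [heq]; exact Int.lt_floor_add_one y)]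
      exact (u ^ ⌊x⌋ * φ * S ^ (-⌊x⌋)).strictMono hxy
  have hsurj : Function.Surjective Φ := by
    intro y
    obtain ⟨n, h1, h2⟩ := hex y
    set ψ := u ^ n * φ * S ^ (-n) with hψ
    have e1 : ψ n = (u ^ n) 0 := by
      simp only [hψ, RelIso.mul_apply, S_zpow]; push_cast
      rw [add_neg_cancel, φ0]
    have e2 : ψ (n + 1) = (u ^ (n + 1)) 0 := by
      simp only [hψ, RelIso.mul_apply, S_zpow]; push_cast
      rw [show (n : ℝ) + 1 + -n = 1 by ring, φ1, hmul]
    refine ⟨ψ.symm y, ?_⟩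
    rw [hΦ n, ← hψ, OrderIso.apply_symm_apply]
    · rw [← ψ.le_iff_le, OrderIso.apply_symm_apply, e1]; exact h1
    · rw [← ψ.lt_iff_lt, OrderIso.apply_symm_apply, e2]; exact h2
  have hψG : ∀ n : ℤ, PL (u ^ n * φ * S ^ (-n) : ℝ ≃o ℝ) := fun n =>
    G.mul_mem (G.mul_mem (G.zpow_mem hu n) hφ) (G.zpow_mem S_mem _)
  have hPL : PL Φ := by
    intro x
    refine ⟨?_, ?_, fun hx => ?_⟩
    · refine ((hψG ⌊x⌋) x).1.congr ?_
      filter_upwards [Icc_mem_nhdsGE (Int.lt_floor_add_one x)] with y hy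
      exact hΦ' _ _ ((Int.floor_le x).trans hy.1) hy.2
    · refine ((hψG (⌈x⌉ - 1)) x).2.1.congr ?_
      have := Int.ceil_lt_add_one x
      filter_upwards [Icc_mem_nhdsLE (show (⌈x⌉ : ℝ) - 1 < x by linarith)] with y hy
      have := Int.le_ceil x
      have := hy.1
      have := hy.2
      exact hΦ' _ _ (by push_cast; linarith) (by push_cast; linarith)
    · refine ((hψG ⌊x⌋) x).2.2 hx |>.congr ?_
      have hlt : (⌊x⌋ : ℝ) < x := by
        refine lt_of_le_of_ne (Int.floor_le x) fun he => hx ?_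
        rw [← he]; exact dy_int _
      filter_upwards [Icc_mem_nhds hlt (Int.lt_floor_add_one x)] with y hy
      exact hΦ' _ _ hy.1 hy.2
  refine ⟨hmono.orderIsoOfSurjective Φ hsurj, hPL, ?_⟩
  ext x
  change Φ (x + 1) = u (Φ x)
  simp only [Φ, Int.floor_add_one, Int.fract_add_one, hmul']

lemma coe_iff (x y : ℝ) : (x : AddCircle (1:ℝ)) = y ↔ ∃ n : ℤ, y = x + n := by
  rw [QuotientAddGroup.eq, AddSubgroup.mem_zmultiples_iff]
  constructor
  · rintro ⟨n, h⟩
    exact ⟨n, by simp at h; linarith⟩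
  · rintro ⟨n, h⟩
    exact ⟨n, by simp; linarith⟩

/-- lifts of circle homeomorphisms -/
abbrev Cz : Subgroup (ℝ ≃o ℝ) := Subgroup.centralizer {S}

lemma Cz_zpow (F : Cz) (x : ℝ) (n : ℤ) : F.1 (x + n) = F.1 x + n := by
  have h : Commute F.1 S := (Subgroup.mem_centralizer_singleton_iff.1 F.2)
  have h2 := (h.zpow_right n).eq
  have := DFunLike.congr_fun h2 x
  simpa only [RelIso.mul_apply, S_zpow] using this

/-- induced circle map -/
def projFun (F : Cz) : AddCircle (1:ℝ) → AddCircle (1:ℝ) :=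
  Quotient.lift (fun x : ℝ => ((F.1 x : ℝ) : AddCircle (1:ℝ))) (by
    intro a b hab
    have hab' : (a : AddCircle (1:ℝ)) = b := Quotient.sound hab
    obtain ⟨n, rfl⟩ := (coe_iff a b).1 hab'
    exact (coe_iff _ _).2 ⟨n, Cz_zpow F a n⟩)

lemma projFun_coe (F : Cz) (x : ℝ) : projFun F (x : AddCircle (1:ℝ)) = ((F.1 x : ℝ) : AddCircle (1:ℝ)) :=
  rfl

lemma projFun_cont (F : Cz) : Continuous (projFun F) :=
  Continuous.quotient_lift ((AddCircle.continuous_mk' (1:ℝ)).comp F.1.continuous) _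

/-- induced circle homeomorphism -/
def projHomeo (F : Cz) : AddCircle (1:ℝ) ≃ₜ AddCircle (1:ℝ) where
  toFun := projFun F
  invFun := projFun F⁻¹
  left_inv x := by
    induction x using QuotientAddGroup.induction_on with
    | H x => 
      rw [projFun_coe, projFun_coe]
      exact congrArg _ (F.1.symm_apply_apply x)
  right_inv x := by
    induction x using QuotientAddGroup.induction_on with
    | H x => 
      rw [projFun_coe, projFun_coe]
      exact congrArg _ (F.1.apply_symm_apply x)
  continuous_toFun := projFun_cont F
  continuous_invFun := projFun_cont _

/-- the covering homomorphism -/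
def proj : Cz →* (AddCircle (1:ℝ) ≃ₜ AddCircle (1:ℝ)) where
  toFun := projHomeo
  map_one' := by
    ext x
    induction x using QuotientAddGroup.induction_on with
    | H x => rfl
  map_mul' a b := by
    ext x
    induction x using QuotientAddGroup.induction_on with
    | H x => rfl

lemma proj_coe (F : Cz) (x : ℝ) : proj F (x : AddCircle (1:ℝ)) = ((F.1 x : ℝ) : AddCircle (1:ℝ)) :=
  rfl

lemma dyPt_iff (x : ℝ) : IsDyadicPt (x : AddCircle (1:ℝ)) ↔ IsDyadic x := by
  constructor
  · rintro ⟨r, hr, h⟩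
    obtain ⟨n, rfl⟩ := (coe_iff _ _).1 h
    exact dy_add hr (dy_int n)
  · intro h; exact ⟨x, h, rfl⟩

/-- uniform dyadic partition adapted to a locally piecewise affine map -/
lemma PL.partition {F : ℝ → ℝ} (hF : PL F) : ∃ N : ℕ, ∀ k : ℤ,
    (Icc ((k : ℝ) / 2 ^ N) (((k : ℝ) + 1) / 2 ^ N) ∩ Icc (0 : ℝ) 1).Nonempty →
    ∃ j : ℤ, ∃ c : ℝ, ∀ x ∈ Icc ((k : ℝ) / 2 ^ N) (((k : ℝ) + 1) / 2 ^ N), F x = (2 : ℝ) ^ j * x + c := by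
  have key : ∃ N0 : ℕ, ∀ N ≥ N0, ∀ k : ℤ,
    (Icc ((k : ℝ) / 2 ^ N) (((k : ℝ) + 1) / 2 ^ N) ∩ Icc (0 : ℝ) 1).Nonempty →
    ∃ j : ℤ, ∃ c : ℝ, ∀ x ∈ Icc ((k : ℝ) / 2 ^ N) (((k : ℝ) + 1) / 2 ^ N), F x = (2 : ℝ) ^ j * x + c := by
    refine isCompact_Icc.induction_on (p := fun s => ∃ N0 : ℕ, ∀ N ≥ N0, ∀ k : ℤ,
      (Icc ((k : ℝ) / 2 ^ N) (((k : ℝ) + 1) / 2 ^ N) ∩ s).Nonempty →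
      ∃ j : ℤ, ∃ c : ℝ, ∀ x ∈ Icc ((k : ℝ) / 2 ^ N) (((k : ℝ) + 1) / 2 ^ N), F x = (2 : ℝ) ^ j * x + c)
      ?_ ?_ ?_ ?_
    · exact ⟨0, fun N _ k h => by simp at h⟩
    · rintro s t hst ⟨N0, h⟩
      exact ⟨N0, fun N hN k hk => h N hN k (hk.mono (inter_subset_inter_right _ hst))⟩
    · rintro s t ⟨N0, h⟩ ⟨N1, h'⟩
      refine ⟨max N0 N1, fun N hN k hk => ?_⟩
      rw [inter_union_distrib_left, union_nonempty] at hk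
      rcases hk with hk | hk
      · exact h N ((le_max_left _ _).trans hN) k hk
      · exact h' N ((le_max_right _ _).trans hN) k hk
    · intro x _
      -- a radius on which the map is affine on relevant intervals
      have loc : ∃ ε > 0, ∃ N0 : ℕ, ∀ N ≥ N0, ∀ k : ℤ,
          Icc ((k : ℝ) / 2 ^ N) (((k : ℝ) + 1) / 2 ^ N) ⊆ Ioo (x - ε) (x + ε) →
          ∃ j : ℤ, ∃ c : ℝ, ∀ y ∈ Icc ((k : ℝ) / 2 ^ N) (((k : ℝ) + 1) / 2 ^ N),
            F y = (2 : ℝ) ^ j * y + c := by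
        by_cases hx : IsDyadic x
        · obtain ⟨⟨j1, c1, -, h1⟩, ⟨j2, c2, -, h2⟩, -⟩ := hF x
          obtain ⟨a, n, hxa⟩ := hx
          rw [eventually_nhdsWithin_iff, Metric.eventually_nhds_iff] at h1 h2
          obtain ⟨e1, he1, h1⟩ := h1
          obtain ⟨e2, he2, h2⟩ := h2
          refine ⟨min e1 e2, lt_min he1 he2, n, fun N hN k hk => ?_⟩
          obtain ⟨d, rfl⟩ := Nat.exists_eq_add_of_le hN
          have hx' : x = ((a * 2 ^ d : ℤ) : ℝ) / 2 ^ (n + d) := by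
            rw [hxa, pow_add]; push_cast; field_simp
          have hdist : ∀ y ∈ Icc ((k : ℝ) / 2 ^ (n + d)) (((k : ℝ) + 1) / 2 ^ (n + d)),
              dist y x < e1 ∧ dist y x < e2 := by
            intro y hy
            obtain ⟨u1, u2⟩ := hk hy
            have : dist y x < min e1 e2 := by
              rw [Real.dist_eq, abs_lt]; constructor <;> linarith
            exact lt_min_iff.1 this
          rcases le_or_gt (a * 2 ^ d) k with hle | hgt
          · refine ⟨j1, c1, fun y hy => h1 (hdist y hy).1 ?_⟩
            refine le_trans ?_ hy.1
            rw [hx']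
            have : ((a * 2 ^ d : ℤ) : ℝ) ≤ k := by exact_mod_cast hle
            gcongr
          · refine ⟨j2, c2, fun y hy => h2 (hdist y hy).2 ?_⟩
            refine le_trans hy.2 ?_
            rw [hx']
            have : (k : ℝ) + 1 ≤ ((a * 2 ^ d : ℤ) : ℝ) := by exact_mod_cast hgt
            gcongr
        · obtain ⟨j, c, -, h⟩ := (hF x).2.2 hx
          rw [Metric.eventually_nhds_iff] at h
          obtain ⟨e, he, h⟩ := h
          refine ⟨e, he, 0, fun N _ k hk => ⟨j, c, fun y hy => h ?_⟩⟩
          obtain ⟨u1, u2⟩ := hk hy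
          rw [Real.dist_eq, abs_lt]; constructor <;> linarith
      obtain ⟨ε, hε, N0, h⟩ := loc
      obtain ⟨N1, hN1⟩ := exists_pow_lt_of_lt_one (half_pos hε) (by norm_num : (1/2 : ℝ) < 1)
      refine ⟨Ioo (x - ε/2) (x + ε/2), mem_nhdsWithin_of_mem_nhds
        (Ioo_mem_nhds (by linarith) (by linarith)), max N0 N1, fun N hN k hk => ?_⟩
      apply h N ((le_max_left _ _).trans hN)
      obtain ⟨z, ⟨z1, z2⟩, z3, z4⟩ := hk
      have hw : ((k : ℝ) + 1) / 2 ^ N = (k : ℝ) / 2 ^ N + (1/2) ^ N := by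
        rw [one_div, inv_pow]; field_simp
      have hle : ((1 : ℝ)/2) ^ N ≤ (1/2) ^ N1 :=
        pow_le_pow_of_le_one (by norm_num) (by norm_num) ((le_max_right _ _).trans hN)
      intro y hy
      obtain ⟨y1, y2⟩ := hy
      constructor <;> linarith
  obtain ⟨N0, h⟩ := key
  exact ⟨N0, h N0 le_rfl⟩

lemma proj_mem {F : Cz} (hF : F.1 ∈ G) : InThompsonT (proj F) := by
  refine ⟨?_, F.1, F.1.strictMono, ⟨fun x => by simpa using Cz_zpow F x 1, fun x => rfl⟩, ?_⟩
  · intro x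
    induction x using QuotientAddGroup.induction_on with
    | H x => 
      rw [proj_coe, dyPt_iff, dyPt_iff, PL.dy_iff hF]
  · obtain ⟨N, hN⟩ := PL.partition hF
    have h2 : (0 : ℝ) < 2 ^ N := by positivity
    refine ⟨2 ^ N, fun i => (i : ℕ) / 2 ^ N, ?_, by simp, by simp, ?_, ?_⟩
    · intro i j hij
      have : ((i : ℕ) : ℝ) < ((j : ℕ) : ℝ) := by exact_mod_cast hij
      simp only
      gcongr
    · intro i
      rw [PL.dy_iff hF]
      have : IsDyadic ((i : ℕ) / 2 ^ N) := ⟨(i : ℕ), N, by simp⟩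
      exact ⟨this, this⟩
    · intro i
      have := hN (i : ℕ) ⟨(i : ℕ) / 2 ^ N, ⟨by simp, by gcongr; simp⟩, by positivity, by
        rw [div_le_one h2]; exact_mod_cast i.2.le⟩
      simpa using this

lemma exists_lift {f : AddCircle (1:ℝ) ≃ₜ AddCircle (1:ℝ)} (hf : InThompsonT f) :
    ∃ F : Cz, F.1 ∈ G ∧ proj F = f := by
  obtain ⟨-, F, hmono, ⟨hper, hlift⟩, m, t, ht, t0, t1, hdy, haff⟩ := hf
  have hper' : ∀ (n : ℤ) (x : ℝ), F (x + n) = F x + n := by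
    intro n x
    induction n with
    | zero => simp
    | succ n ih => push_cast at *; rw [← add_assoc, hper, ih]; ring
    | pred n ih =>
      have := hper (x + (-(n : ℝ) - 1))
      rw [show x + (-(n : ℝ) - 1) + 1 = x + -n by ring] at this
      push_cast at *
      linarith
  have hsurj : Function.Surjective F := by
    intro y
    obtain ⟨x, hx⟩ := f.surjective (y : AddCircle (1:ℝ))
    induction x using QuotientAddGroup.induction_on with
    | H x => 
      have h2 : ((F x : ℝ) : AddCircle (1:ℝ)) = y := (hlift x).symm.trans hx
      obtain ⟨n, rfl⟩ := (coe_iff _ _).1 h2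
      exact ⟨x + n, hper' n x⟩
  have hpiece : ∀ i : Fin m, ∃ k : ℤ, ∃ c : ℝ, IsDyadic c ∧
      ∀ x ∈ Icc (t i.castSucc) (t i.succ), F x = (2 : ℝ) ^ k * x + c := by
    intro i
    obtain ⟨k, c, h⟩ := haff i
    refine ⟨k, c, ?_, h⟩
    have e := h (t i.castSucc) ⟨le_rfl, (ht i.castSucc_lt_succ).le⟩
    have : c = F (t i.castSucc) - 2 ^ k * t i.castSucc := by linarith
    rw [this]
    exact dy_sub (hdy _).2 (dy_zpow_mul k (hdy _).1)
  have find1 : ∀ x, 0 ≤ x → x < 1 → ∃ i : Fin m, t i.castSucc ≤ x ∧ x < t i.succ := by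
    intro x h0 h1
    by_contra hcon
    push Not at hcon
    have : ∀ j : Fin (m + 1), t j ≤ x := by
      intro j
      induction j using Fin.induction with
      | zero => rw [t0]; exact h0
      | succ i ih => exact hcon i ih
    have := this (Fin.last m)
    linarith
  have find2 : ∀ x, 0 < x → x ≤ 1 → ∃ i : Fin m, t i.castSucc < x ∧ x ≤ t i.succ := by
    intro x h0 h1
    by_contra hcon
    push Not at hcon
    have : ∀ j : Fin (m + 1), t j < x := by
      intro j
      induction j using Fin.induction with
      | zero => rw [t0]; exact h0
      | succ i ih => exact hcon i ih
    have := this (Fin.last m)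
    linarith
  -- transfer of germs under integer translations
  have htrans : ∀ (n : ℤ) (l l' : Filter ℝ), DA F l → Tendsto (fun y : ℝ => y - n) l' l → DA F l' := by
    rintro n l l' ⟨k, c, hc, h⟩ hl
    refine ⟨k, c + n - 2 ^ k * n, dy_sub (dy_add hc (dy_int n)) (dy_zpow_mul k (dy_int n)), ?_⟩
    filter_upwards [hl.eventually h] with y hy
    have := hper' n (y - n)
    rw [sub_add_cancel] at this
    rw [this, hy]; ring
  have tnd : ∀ (n : ℤ) (x : ℝ), Tendsto (fun y : ℝ => y - n) (𝓝 x) (𝓝 (x - n)) := fun n x =>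
    (continuous_id.sub continuous_const).tendsto x
  have hPL : PL F := by
    intro x
    refine ⟨?_, ?_, fun hx => ?_⟩
    · obtain ⟨i, h1, h2⟩ := find1 (x - ⌊x⌋) (Int.fract_nonneg x) (Int.fract_lt_one x)
      obtain ⟨k, c, hc, h⟩ := hpiece i
      refine htrans ⌊x⌋ _ _ ((DA.of_Icc hc h).1 _ h1 h2) ?_
      exact tendsto_nhdsWithin_iff.2 ⟨(tnd _ x).mono_left nhdsWithin_le_nhds,
        eventually_mem_nhdsWithin.mono fun y hy => by simp only [mem_Ici] at *; linarith⟩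
    · have e1 := Int.ceil_lt_add_one x
      have e2 := Int.le_ceil x
      obtain ⟨i, h1, h2⟩ := find2 (x - (⌈x⌉ - 1 : ℤ)) (by push_cast; linarith) (by push_cast; linarith)
      obtain ⟨k, c, hc, h⟩ := hpiece i
      refine htrans (⌈x⌉ - 1) _ _ ((DA.of_Icc hc h).2.1 _ h1 h2) ?_
      exact tendsto_nhdsWithin_iff.2 ⟨(tnd _ x).mono_left nhdsWithin_le_nhds,
        eventually_mem_nhdsWithin.mono fun y hy => by simp only [mem_Iic] at *; linarith⟩
    · obtain ⟨i, h1, h2⟩ := find1 (x - ⌊x⌋) (Int.fract_nonneg x) (Int.fract_lt_one x)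
      obtain ⟨k, c, hc, h⟩ := hpiece i
      refine htrans ⌊x⌋ _ _ ((DA.of_Icc hc h).2.2 _ (lt_of_le_of_ne h1 ?_) h2) (tnd _ x)
      intro he
      apply hx
      have := dy_add (hdy i.castSucc).1 (dy_int ⌊x⌋)
      rwa [he, sub_add_cancel] at this
  let Fo : ℝ ≃o ℝ := hmono.orderIsoOfSurjective F hsurj
  have hFo : Fo ∈ Cz := by
    rw [Subgroup.mem_centralizer_singleton_iff]
    ext x
    exact hper x
  refine ⟨⟨Fo, hFo⟩, hPL, ?_⟩
  ext x
  induction x using QuotientAddGroup.induction_on with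
  | H x => exact (hlift x).symm

lemma proj_eq_one {F : Cz} (h : proj F = 1) : ∃ p : ℤ, F.1 = S ^ p := by
  have hx : ∀ x : ℝ, ∃ n : ℤ, F.1 x = x + n := by
    intro x
    have : proj F (x : AddCircle (1:ℝ)) = x := by rw [h]; rfl
    rw [proj_coe] at this
    exact (coe_iff _ _).1 this.symm
  obtain ⟨p, hp⟩ := hx 0
  rw [zero_add] at hp
  refine ⟨p, ?_⟩
  ext x
  rw [S_zpow]
  obtain ⟨n, hn⟩ := hx x
  rw [hn]
  have h1 : F.1 ⌊x⌋ = p + ⌊x⌋ := by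
    have := Cz_zpow F 0 ⌊x⌋
    rwa [zero_add, hp] at this
  have h2 : F.1 (⌊x⌋ + 1) = p + ⌊x⌋ + 1 := by
    have := Cz_zpow F 0 (⌊x⌋ + 1)
    push_cast at this
    rw [zero_add, hp] at this
    linarith
  have h3 := F.1.monotone (Int.floor_le x)
  have h4 := F.1.strictMono (Int.lt_floor_add_one x)
  have h5 := Int.floor_le x
  have h6 := Int.lt_floor_add_one x
  rw [h1, hn] at h3
  rw [h2, hn] at h4
  have a1 : (p : ℝ) < n + 1 := by linarith
  have a2 : (n : ℝ) < p + 1 := by linarith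
  have a1' : p < n + 1 := by exact_mod_cast a1
  have a2' : n < p + 1 := by exact_mod_cast a2
  have : n = p := by omega
  rw [this]

lemma exists_root (n : ℕ) (hn : 1 ≤ n) : ∃ C : Cz, C.1 ∈ G ∧ C.1 ^ n = S := by
  obtain ⟨Φ, hΦ, h⟩ := exists_conj (G.pow_mem S_mem n) one_pos hn (pow_one (S ^ n))
  have hroot : (Φ⁻¹ * S * Φ) ^ n = S := by
    have e := conj_pow (i := n) (a := Φ⁻¹) (b := S)
    rw [inv_inv] at e
    rw [e, mul_assoc, ← h, inv_mul_cancel_left]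
  refine ⟨⟨Φ⁻¹ * S * Φ, ?_⟩, G.mul_mem (G.mul_mem (G.inv_mem hΦ) S_mem) hΦ, hroot⟩
  rw [Subgroup.mem_centralizer_singleton_iff]
  have e := ((Commute.refl (Φ⁻¹ * S * Φ)).pow_right n).eq
  rwa [hroot] at e

lemma S_mem_Cz : S ∈ Cz := by
  rw [Subgroup.mem_centralizer_singleton_iff]

lemma proj_S : proj ⟨S, S_mem_Cz⟩ = 1 := by
  ext x
  induction x using QuotientAddGroup.induction_on with
  | H x => exact ((coe_iff x (x + 1)).2 ⟨1, by simp⟩).symm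

lemma order_root {n : ℕ} (hn : 1 ≤ n) {C : Cz} (hC : C.1 ^ n = S) : orderOf (proj C) = n := by
  rw [orderOf_eq_iff hn]
  have e : C ^ n = ⟨S, S_mem_Cz⟩ := Subtype.ext hC
  refine ⟨by rw [← map_pow, e, proj_S], ?_⟩
  intro m hm hm0 hone
  rw [← map_pow] at hone
  obtain ⟨p, hp⟩ := proj_eq_one hone
  have hp' : C.1 ^ m = S ^ p := hp
  have h1 : S ^ m = S ^ (p * n) := by
    rw [zpow_mul, ← hp', zpow_natCast, ← pow_mul, mul_comm, pow_mul, hC]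
  have h2 := DFunLike.congr_fun h1 (0 : ℝ)
  rw [S_pow, S_zpow] at h2
  have h3 : (m : ℤ) = p * n := by simp at h2; exact_mod_cast h2
  have h4 : (n : ℤ) ∣ m := ⟨p, by rw [h3, mul_comm]⟩
  have := Nat.le_of_dvd hm0 (Int.natCast_dvd_natCast.1 h4)
  omega

lemma torsion_root {F : Cz} {q : ℕ} (hq : 0 < q) (h : proj F ^ q = 1) (hF : F.1 ∈ G) :
    ∃ n : ℕ, 1 ≤ n ∧ ∃ k : ℤ, ∃ u : Cz, u.1 ∈ G ∧ u.1 ^ n = S ∧ F = u ^ k := by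
  rw [← map_pow] at h
  obtain ⟨p, hp⟩ := proj_eq_one h
  have hp : F.1 ^ q = S ^ p := hp
  have hcomm : Commute F.1 S := Subgroup.mem_centralizer_singleton_iff.1 F.2
  obtain ⟨d, p', q', hd, hcop, hp', hq'⟩ : ∃ (d : ℕ) (p' : ℤ) (q' : ℕ), 0 < d ∧
      IsCoprime p' (q' : ℤ) ∧ p = p' * d ∧ q = q' * d := by
    have hg : 0 < Int.gcd p q := Int.gcd_pos_of_ne_zero_right _ (by exact_mod_cast hq.ne')
    obtain ⟨q', hq'⟩ : Int.gcd p q ∣ q := Int.natCast_dvd_natCast.1 (Int.gcd_dvd_right _ _)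
    obtain ⟨p', hp'⟩ := Int.gcd_dvd_left p (q : ℤ)
    refine ⟨Int.gcd p q, p', q', hg, ?_, by rw [mul_comm]; exact hp', by rw [mul_comm]; exact hq'⟩
    rw [Int.isCoprime_iff_gcd_eq_one]
    have e : Int.gcd p q = Int.gcd p q * Int.gcd p' q' := by
      generalize hgd : Int.gcd p q = g at *
      have e2 : Int.gcd p q = g * Int.gcd p' q' := by
        rw [hp', show (q : ℤ) = (g : ℤ) * (q' : ℤ) by exact_mod_cast hq', Int.gcd_mul_left]
        simp
      rw [← e2, hgd]
    exact Nat.eq_of_mul_eq_mul_left hg (by rw [← e, mul_one])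
  have hq'0 : 1 ≤ q' := by
    rcases Nat.eq_zero_or_pos q' with h0 | h0
    · simp [h0] at hq'; omega
    · exact h0
  have hFS : F.1 ^ q' = S ^ p' := by
    ext x
    have hc : Commute (F.1 ^ q') (S ^ p') := (hcomm.pow_left q').zpow_right p'
    have hc' : Function.Commute (⇑(F.1 ^ q')) (⇑(S ^ p')) := fun y => DFunLike.congr_fun hc.eq y
    refine (hc'.iterate_pos_eq_iff_map_eq (F.1 ^ q').monotone (S ^ p').strictMono hd).1 ?_
    rw [← coe_pow, ← coe_pow, ← pow_mul, ← hq', hp, ← zpow_natCast, ← zpow_mul, ← hp']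
  obtain ⟨a, b, hab⟩ := hcop
  let s : Cz := ⟨S, S_mem_Cz⟩
  have hFs : F ^ q' = s ^ p' := Subtype.ext hFS
  have hcs : Commute F s := Subtype.ext hcomm.eq
  have hcs' : Commute (F ^ a) (s ^ b) := (hcs.zpow_left a).zpow_right b
  refine ⟨q', hq'0, p', F ^ a * s ^ b, ?_, ?_, ?_⟩
  · exact G.mul_mem (G.zpow_mem hF a) (G.zpow_mem S_mem b)
  · have : (F ^ a * s ^ b) ^ q' = s := by
      rw [hcs'.mul_pow, ← zpow_natCast, ← zpow_natCast, ← zpow_mul, ← zpow_mul, mul_comm a, zpow_mul,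
        zpow_natCast, hFs, ← zpow_mul, ← zpow_add, mul_comm p' a, hab, zpow_one]
    exact congrArg Subtype.val this
  · rw [hcs'.mul_zpow, ← zpow_mul, ← zpow_mul, mul_comm b, zpow_mul s, ← hFs, ← zpow_natCast,
      ← zpow_mul, ← zpow_add, mul_comm (q' : ℤ), hab, zpow_one]

lemma conj_roots {n : ℕ} (hn : 1 ≤ n) {u C : Cz} (hu : u.1 ∈ G) (hC : C.1 ∈ G)
    (hun : u.1 ^ n = S) (hCn : C.1 ^ n = S) : ∃ h : Cz, h.1 ∈ G ∧ u * h = h * C := by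
  obtain ⟨Φ, hΦ, h1⟩ := exists_conj hu hn one_pos (hun.trans (pow_one S).symm)
  obtain ⟨Ψ, hΨ, h2⟩ := exists_conj hC hn one_pos (hCn.trans (pow_one S).symm)
  have key : SemiconjBy (Φ * Ψ⁻¹) C.1 u.1 := by
    have a1 : SemiconjBy Φ S u.1 := h1
    have a2 : SemiconjBy Ψ S C.1 := h2
    exact a1.mul_left a2.inv_symm_left
  have key2 := key.pow_right n
  rw [hun, hCn] at key2
  refine ⟨⟨Φ * Ψ⁻¹, ?_⟩, G.mul_mem hΦ (G.inv_mem hΨ), Subtype.ext key.eq.symm⟩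
  rw [Subgroup.mem_centralizer_singleton_iff]
  exact key2.eq

end ThompsonAux

/-- (Burillo–Cleary–Stein–Taback) There is a sequence `(c n)` of elements of Thompson's
group `T` such that for every `n ≥ 1` the element `c n` lies in `T` and has order
exactly `n`, and every torsion element of `T` is conjugate in `T` to a power of some
`c n`. -/
theorem thompsonT_torsion_classification :
    ∃ c : ℕ → (AddCircle (1:ℝ) ≃ₜ AddCircle (1:ℝ)),
      (∀ n : ℕ, 1 ≤ n → InThompsonT (c n) ∧ orderOf (c n) = n) ∧
      ∀ f : AddCircle (1:ℝ) ≃ₜ AddCircle (1:ℝ), InThompsonT f → IsOfFinOrder f →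
        ∃ n : ℕ, 1 ≤ n ∧ ∃ k : ℤ, ∃ h : AddCircle (1:ℝ) ≃ₜ AddCircle (1:ℝ),
          InThompsonT h ∧ h⁻¹ * f * h = c n ^ k := by
  classical
  open ThompsonAux in
  choose C hCG hCn using exists_root
  refine ⟨fun n => if hn : 1 ≤ n then ThompsonAux.proj (C n hn) else 1, ?_, ?_⟩
  · intro n hn
    simp only [hn, dif_pos]
    exact ⟨ThompsonAux.proj_mem (hCG n hn), ThompsonAux.order_root hn (hCn n hn)⟩
  · intro f hf hfin
    obtain ⟨F, hF, rfl⟩ := ThompsonAux.exists_lift hf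
    obtain ⟨q, hq, hone⟩ := isOfFinOrder_iff_pow_eq_one.1 hfin
    obtain ⟨n, hn, k, u, hu, hun, rfl⟩ := ThompsonAux.torsion_root hq hone hF
    obtain ⟨h, hh, hconj⟩ := ThompsonAux.conj_roots hn hu (hCG n hn) hun (hCn n hn)
    refine ⟨n, hn, k, ThompsonAux.proj h, ThompsonAux.proj_mem hh, ?_⟩
    simp only [hn, dif_pos]
    rw [← map_zpow, ← map_inv, ← map_mul, ← map_mul]
    congr 1
    have hs : SemiconjBy h (C n hn) u := hconj.symm
    rw [mul_assoc, ← (hs.zpow_right k).eq, inv_mul_cancel_left]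
end
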